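/- arXiv:2112.12081 — 5 statements merged into one kernel-verified Lean document; each statement's English description precedes it below -/
import Mathlib

section
/- If a and b are positive real numbers with a·b = 1, then ((√5+1)/2 + R(e^{−2πa})) · ((√5+1)/2 + R(e^{−2πb})) = (5+√5)/2. -/
/-!
Write `φ = (1 + √5)/2` and `T t u = ∑_{n ∈ ℤ} (-1)^n exp(-π t (n + u)²)`.

* By the Jacobi triple product (`jtp`) with nome `q⁵`, where `q = exp(-2πa)`, and after completing
  the square, `R(q) = T (5a) (3/10) / T (5a) (1/10)`; the denominator is positive because it is a
  positive multiple of a convergent product of positive factors (`rrcf_eq`).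
* Poisson summation (`thT_poisson`) turns `√t * T t u` into a sum over odd `m` of
  `exp(-π m²/(4t)) cos(π u m)`. For `t = 5a` and `b = 1/a`, sorting the `m` by residue modulo `10`
  expresses this again through `T (5b)` (`thT_split`). Since `T` is even and antiperiodic in `u`,
  and `cos(π/10) = φ cos(3π/10)`, the vector `(T (5a) (1/10), T (5a) (3/10))` is a scalar times the
  matrix `!![φ, 1; 1, -φ]` applied to `(T (5b) (1/10), T (5b) (3/10))` (`thT_rel`).

Hence `R(e^{-2πa}) = (1 - φ R') / (φ + R')` with `R' = R(e^{-2πb})`, and therefore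
`(φ + R) (φ + R') = φ² + 1 = (5 + √5)/2`.

The triple product is obtained from the finite `q`-binomial theorem by symmetrizing and letting the
number of factors tend to infinity under dominated convergence.
-/

open Real

/-- The Rogers–Ramanujan continued fraction value, via its product expansion,
for real `q` with `0 < q < 1`. -/
noncomputable def rrcf (q : ℝ) : ℝ :=
  q ^ ((1 : ℝ)/5) *
    ∏' n : ℕ,
      (1 - q ^ (5*(n+1) - 1)) * (1 - q ^ (5*(n+1) - 4)) /
      ((1 - q ^ (5*(n+1) - 2)) * (1 - q ^ (5*(n+1) - 3)))

/-- Jacobi's second theta function `θ₂(z; q)` for real `z` and `0 < q < 1`. -/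
noncomputable def theta2 (z q : ℝ) : ℝ :=
  2 * ∑' n : ℕ, q ^ (((n : ℝ) + 1/2)^2) * Real.cos ((2*(n : ℝ) + 1) * z)

/-- Ramanujan's function `f(-q) = ∑_{n ∈ ℤ} (-1)^n q^{n(3n-1)/2}`. -/
noncomputable def fneg (q : ℝ) : ℝ :=
  ∑' n : ℤ, (-1 : ℝ) ^ n * q ^ (n * (3*n - 1) / 2)

/-- The golden-ratio conjugate `α = (1 - √5)/2`. -/
noncomputable def alphaRR : ℝ := (1 - Real.sqrt 5) / 2

/-- The golden ratio `β = (1 + √5)/2`. -/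
noncomputable def betaRR : ℝ := (1 + Real.sqrt 5) / 2

open Filter Topology

/-! ### The alternating theta series and Poisson summation -/

/-- The alternating shifted theta series `T t u = ∑_{n ∈ ℤ} (-1)^n exp(-π t (n + u)²)`,
convergent for `t > 0`. -/
noncomputable def thT (t u : ℝ) : ℝ := ∑' n : ℤ, (-1 : ℝ) ^ n * exp (-π * t * (n + u) ^ 2)

/-- The terms are, up to a constant factor, the norms of those of the two-variable Jacobi theta
series at purely imaginary arguments. -/
lemma summable_gauss {t : ℝ} (ht : 0 < t) (u : ℝ) :
    Summable fun n : ℤ => exp (-π * t * (n + u) ^ 2) := by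
  have h := (summable_jacobiTheta₂_term_iff (t * u * Complex.I) (t * Complex.I)).2 (by simpa using ht)
  refine (h.norm.mul_left (exp (-π * t * u ^ 2))).congr fun n => ?_
  rw [norm_jacobiTheta₂_term, ← exp_add]
  congr 1
  simp
  ring

lemma summable_thT {t : ℝ} (ht : 0 < t) (u : ℝ) :
    Summable fun n : ℤ => (-1 : ℝ) ^ n * exp (-π * t * (n + u) ^ 2) := by
  refine Summable.of_norm ((summable_gauss ht u).congr fun n => ?_)
  rw [norm_mul, norm_eq_abs, abs_neg_one_zpow, one_mul, norm_eq_abs, abs_exp]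

lemma thT_neg (t u : ℝ) : thT t (-u) = thT t u := by
  unfold thT
  rw [← (Equiv.neg ℤ).tsum_eq]
  refine tsum_congr fun n => ?_
  simp only [Equiv.neg_apply, zpow_neg, Int.cast_neg]
  rw [← inv_zpow, show (-1 : ℝ)⁻¹ = -1 by norm_num, show (-(n : ℝ) + -u) ^ 2 = (n + u) ^ 2 by ring]

lemma thT_add_one (t u : ℝ) : thT t (u + 1) = -thT t u := by
  unfold thT
  rw [← (Equiv.addRight (-1 : ℤ)).tsum_eq, ← tsum_neg]
  refine tsum_congr fun n => ?_
  simp only [Equiv.coe_addRight, Int.cast_add]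
  rw [zpow_add₀ (by norm_num), show (-1 : ℝ) ^ (-1 : ℤ) = -1 by norm_num,
    show (n : ℝ) + ((-1 : ℤ) : ℝ) + (u + 1) = n + u by push_cast; ring]
  ring

lemma cexp_pi_I_zpow (n : ℤ) : Complex.exp (π * Complex.I * n) = ((-1 : ℝ) ^ n : ℝ) := by
  rw [mul_comm, Complex.exp_int_mul, Complex.exp_pi_mul_I]
  push_cast
  rfl

/-- Poisson summation for `T`: the Gaussian quadratic formula with linear coefficient
`-t u + i/2` (the `i/2` produces the signs `(-1)^n`), followed by taking real parts. -/
lemma thT_poisson {t : ℝ} (ht : 0 < t) (u : ℝ) :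
    √t * thT t u =
      ∑' n : ℤ, exp (-π * t⁻¹ * (n + -(1 / 2)) ^ 2) * cos (2 * π * u * (n + -(1 / 2))) := by
  have htc : (t : ℂ) ≠ 0 := by exact_mod_cast ht.ne'
  have key := Complex.tsum_exp_neg_quadratic (a := t) (by simpa using ht) (-t * u + Complex.I / 2)
  have hl : ∀ n : ℤ, Complex.exp (-π * t * n ^ 2 + 2 * π * (-t * u + Complex.I / 2) * n) =
      (exp (π * t * u ^ 2) : ℝ) * (((-1 : ℝ) ^ n * exp (-π * t * (n + u) ^ 2) : ℝ) : ℂ) := by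
    intro n
    rw [Complex.ofReal_mul, ← cexp_pi_I_zpow, Complex.ofReal_exp, Complex.ofReal_exp,
      ← Complex.exp_add, ← Complex.exp_add]
    congr 1
    push_cast
    ring
  have hr : ∀ n : ℤ, Complex.exp (-π / t * (n + Complex.I * (-t * u + Complex.I / 2)) ^ 2) =
      (exp (π * t * u ^ 2) : ℝ) * ((exp (-π * t⁻¹ * (n + -(1 / 2)) ^ 2) : ℝ) *
        Complex.exp ((2 * π * u * (n + -(1 / 2)) : ℝ) * Complex.I)) := by
    intro n
    have : Complex.I * (-t * u + Complex.I / 2) = -(1 / 2) - t * u * Complex.I := by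
      linear_combination (1 / 2 : ℂ) * Complex.I_sq
    rw [this, Complex.ofReal_exp, Complex.ofReal_exp,
      ← Complex.exp_add, ← Complex.exp_add]
    congr 1
    push_cast
    field_simp
    linear_combination (-4 * t ^ 2 * u ^ 2 : ℂ) * Complex.I_sq
  have hc : (1 : ℂ) / (t : ℂ) ^ (1 / 2 : ℂ) = ((√t)⁻¹ : ℝ) := by
    rw [sqrt_eq_rpow, Complex.ofReal_inv, Complex.ofReal_cpow ht.le]
    simp
  simp_rw [hl, hr] at key
  rw [hc, tsum_mul_left, tsum_mul_left, mul_left_comm] at key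
  have h0 : ((exp (π * t * u ^ 2) : ℝ) : ℂ) ≠ 0 := by exact_mod_cast (exp_pos _).ne'
  have key2 := congrArg Complex.re (mul_left_cancel₀ h0 key)
  rw [← Complex.ofReal_tsum, Complex.ofReal_re, Complex.re_ofReal_mul, Complex.re_tsum] at key2
  · change thT t u = _ at key2
    rw [key2, ← mul_assoc, mul_inv_cancel₀ (sqrt_pos.2 ht).ne', one_mul]
    refine tsum_congr fun n => ?_
    rw [Complex.re_ofReal_mul, Complex.exp_ofReal_mul_I_re]
  · refine Summable.of_norm ((summable_gauss (inv_pos.2 ht) (-(1 / 2))).congr fun n => ?_)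
    rw [norm_mul, Complex.norm_exp_ofReal_mul_I, mul_one, Complex.norm_real, norm_eq_abs, abs_exp]

lemma cos_add_odd_int_pi (x : ℝ) (n s : ℤ) (hs : Odd s) :
    cos (x + n * s * π) = (-1) ^ n * cos x := by
  have := cos_add_int_mul_pi x (n * s)
  push_cast at this
  rw [this]
  congr 1
  rcases Int.even_or_odd n with h | h
  · rw [(h.mul_right s).neg_one_zpow, h.neg_one_zpow]
  · rw [(h.mul hs).neg_one_zpow, h.neg_one_zpow]

/-- The transformation `a ↦ b = 1/a` for odd `s`: the frequencies `m = 2n - 1` in the Poisson dual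
of `T (5a) (s/10)` are grouped by writing `n = 5j + i` with `0 ≤ i < 5`, so that
`m = 10 (j + (2i - 1)/10)` and `cos(π s m / 10)` depends on `j` only through the sign `(-1)^j`. -/
lemma thT_split {a b : ℝ} (ha : 0 < a) (hb : 0 < b) (hab : a * b = 1) (s : ℤ) (hs : Odd s) :
    √(5 * a) * thT (5 * a) (s / 10) =
      ∑ i : Fin 5, cos (s * (2 * (i : ℝ) - 1) * (π / 10)) *
        thT (5 * b) ((2 * (i : ℝ) - 1) / 10) := by
  have hb' : b = a⁻¹ := (eq_inv_of_mul_eq_one_right hab)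
  rw [thT_poisson (by positivity), ← (Int.divModEquiv 5).symm.tsum_eq]
  have hterm : ∀ p : ℤ × Fin 5,
      exp (-π * (5 * a)⁻¹ * ((((Int.divModEquiv 5).symm p : ℤ) : ℝ) + -(1 / 2)) ^ 2) *
        cos (2 * π * (s / 10) * ((((Int.divModEquiv 5).symm p : ℤ) : ℝ) + -(1 / 2))) =
      cos (s * (2 * (p.2 : ℝ) - 1) * (π / 10)) * ((-1) ^ p.1 *
        exp (-π * (5 * b) * (p.1 + (2 * (p.2 : ℝ) - 1) / 10) ^ 2)) := by
    rintro ⟨j, i⟩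
    simp only [Int.divModEquiv_symm_apply]
    push_cast
    have h1 : -π * (5 * a)⁻¹ * ((j : ℝ) * 5 + (i : ℕ) + -(1 / 2)) ^ 2 =
        -π * (5 * b) * (j + (2 * ((i : ℕ) : ℝ) - 1) / 10) ^ 2 := by
      rw [hb']; field_simp; ring
    have h2 : 2 * π * (s / 10) * ((j : ℝ) * 5 + (i : ℕ) + -(1 / 2)) =
        s * (2 * ((i : ℕ) : ℝ) - 1) * (π / 10) + j * s * π := by ring
    rw [h1, h2, cos_add_odd_int_pi _ _ _ hs]
    ring
  have hsum : ∀ i : Fin 5, Summable fun j : ℤ =>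
      cos (s * (2 * (i : ℝ) - 1) * (π / 10)) * ((-1 : ℝ) ^ j *
        exp (-π * (5 * b) * (j + (2 * (i : ℝ) - 1) / 10) ^ 2)) := fun i =>
    (summable_thT (by positivity) _).mul_left _
  have hall : Summable fun p : ℤ × Fin 5 =>
      cos (s * (2 * (p.2 : ℝ) - 1) * (π / 10)) * ((-1) ^ p.1 *
        exp (-π * (5 * b) * (p.1 + (2 * (p.2 : ℝ) - 1) / 10) ^ 2)) := by
    rw [← funext hterm]
    refine ((Int.divModEquiv 5).symm.summable_iff (f := fun n : ℤ =>
      exp (-π * (5 * a)⁻¹ * ((n : ℝ) + -(1 / 2)) ^ 2) *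
        cos (2 * π * (s / 10) * ((n : ℝ) + -(1 / 2))))).2 ?_
    refine Summable.of_norm_bounded (summable_gauss (t := (5 * a)⁻¹) (by positivity) (-(1 / 2)))
      fun n => ?_
    rw [norm_mul, norm_eq_abs, abs_exp]
    exact mul_le_of_le_one_right (exp_pos _).le (abs_cos_le_one _)
  rw [tsum_congr hterm, ← (Equiv.prodComm _ _).tsum_eq]
  refine (Summable.tsum_prod' ((Equiv.prodComm _ _).summable_iff.2 hall) hsum).trans ?_
  rw [tsum_fintype]
  refine Finset.sum_congr rfl fun i _ => ?_
  rw [thT, ← tsum_mul_left]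
  rfl

/-- `φ cos(3π/10) = 2 cos(π/5) cos(3π/10) = cos(π/2) + cos(π/10)`. -/
lemma cos_pi_div_ten : cos (π / 10) = (√5 + 1) / 2 * cos (3 * (π / 10)) := by
  have h := cos_add (π / 5) (3 * (π / 10))
  have h' := cos_sub (3 * (π / 10)) (π / 5)
  rw [show π / 5 + 3 * (π / 10) = π / 2 by ring, cos_pi_div_two] at h
  rw [show 3 * (π / 10) - π / 5 = π / 10 by ring] at h'
  rw [cos_pi_div_five] at h h'
  linear_combination h' + h

/-- In the five-term sums for `s = 1` and `s = 3`, the middle residue `5` has a vanishing cosine,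
and the residues `-1` and `7` duplicate `1` and `3`. -/
lemma thT_rel {a b : ℝ} (ha : 0 < a) (hb : 0 < b) (hab : a * b = 1) :
    √(5 * a) * thT (5 * a) (1 / 10) = 2 * cos (3 * (π / 10)) *
      ((√5 + 1) / 2 * thT (5 * b) (1 / 10) + thT (5 * b) (3 / 10)) ∧
    √(5 * a) * thT (5 * a) (3 / 10) = 2 * cos (3 * (π / 10)) *
      (thT (5 * b) (1 / 10) - (√5 + 1) / 2 * thT (5 * b) (3 / 10)) := by
  have e1 := thT_split ha hb hab 1 (by decide)
  have e3 := thT_split ha hb hab 3 (by decide)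
  have t1 : thT (5 * b) (-(1 / 10)) = thT (5 * b) (1 / 10) := by
    exact thT_neg _ _
  have t7 : thT (5 * b) (7 / 10) = -thT (5 * b) (3 / 10) := by
    rw [← thT_neg _ (3 / 10), ← thT_add_one]; norm_num
  have c5 : cos (5 * (π / 10)) = 0 := by rw [← cos_pi_div_two]; ring_nf
  have c15 : cos (15 * (π / 10)) = 0 := by
    rw [show 15 * (π / 10) = π / 2 + π by ring, cos_add_pi, cos_pi_div_two, neg_zero]
  have c7 : cos (7 * (π / 10)) = -cos (3 * (π / 10)) := by
    rw [← cos_pi_sub]; ring_nf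
  have c9 : cos (9 * (π / 10)) = -cos (π / 10) := by
    rw [← cos_pi_sub]; ring_nf
  have c21 : cos (21 * (π / 10)) = cos (π / 10) := by
    rw [show 21 * (π / 10) = π / 10 + 2 * π by ring, cos_add_two_pi]
  simp only [Fin.sum_univ_five] at e1 e3
  norm_num only [Int.cast_one, Int.cast_ofNat, one_mul, Fin.val_zero, Fin.val_one, Fin.val_two,
    Fin.coe_ofNat_eq_mod] at e1 e3
  have c1 : cos (1 * (π / 10)) = cos (π / 10) := by rw [one_mul]
  norm_num only [t1, t7, c5, c15, c7, c9, c21, cos_neg, c1, neg_mul] at e1 e3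
  have h10 := cos_pi_div_ten
  constructor
  · linear_combination e1 + 2 * thT (5 * b) (1 / 10) * h10
  · linear_combination e3 - 2 * thT (5 * b) (3 / 10) * h10

/-! ### The Jacobi triple product -/

/-- The finite `q`-Pochhammer symbol `∏_{i=1}^{n} (1 - r^{2i})`. The base is a square `r²` so that
the exponents `n(n-1)/2` of the triple product become `n(n-1)` powers of `r`. -/
noncomputable def qP (r : ℝ) (n : ℕ) : ℝ := ∏ i ∈ Finset.range n, (1 - r ^ (2 * (i + 1)))

/-- The Gaussian binomial coefficient `[M choose k]` in the base `r²`, extended by `0` to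
`k > M`. -/
noncomputable def qG (r : ℝ) (M k : ℕ) : ℝ := if k ≤ M then qP r M / (qP r k * qP r (M - k)) else 0

lemma qP_succ (r : ℝ) (n : ℕ) : qP r (n + 1) = qP r n * (1 - r ^ (2 * (n + 1))) :=
  Finset.prod_range_succ _ _

lemma factor_pos {r : ℝ} (h0 : 0 < r) (h1 : r < 1) (i : ℕ) : 0 < 1 - r ^ (2 * (i + 1)) :=
  sub_pos.2 (pow_lt_one₀ h0.le h1 (by omega))

lemma qP_pos {r : ℝ} (h0 : 0 < r) (h1 : r < 1) (n : ℕ) : 0 < qP r n :=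
  Finset.prod_pos fun i _ => factor_pos h0 h1 i

lemma qG_zero {r : ℝ} (h0 : 0 < r) (h1 : r < 1) (M : ℕ) : qG r M 0 = 1 := by
  have := (qP_pos h0 h1 M).ne'
  have h : qP r 0 = 1 := by simp [qP]
  simp [qG, h, this]

/-- The `q`-Pascal rule. -/
lemma qG_succ {r : ℝ} (h0 : 0 < r) (h1 : r < 1) (M k : ℕ) :
    qG r (M + 1) (k + 1) = qG r M k + r ^ (2 * (k + 1)) * qG r M (k + 1) := by
  have hP := fun n => (qP_pos h0 h1 n).ne'
  have hf := fun n => (factor_pos h0 h1 n).ne'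
  rcases lt_trichotomy k M with h | rfl | h
  · obtain ⟨d, rfl⟩ := Nat.exists_eq_add_of_lt h
    have e1 : k + d + 1 + 1 - (k + 1) = d + 1 := by omega
    have e2 : k + d + 1 - k = d + 1 := by omega
    have e3 : k + d + 1 - (k + 1) = d := by omega
    simp only [qG, e1, e2, e3]
    rw [if_pos (by omega), if_pos (by omega), if_pos (by omega), qP_succ r (k + d + 1),
      qP_succ r k, qP_succ r d]
    have := hP k
    have := hP d
    have := hf k
    have := hf d
    field_simp
    ring
  · simp only [qG, le_refl, if_true, Nat.sub_self]
    rw [if_neg (by omega)]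
    have := hP k
    have := hP (k + 1)
    have h : qP r 0 = 1 := by simp [qP]
    rw [h]
    field_simp
    simp
  · simp only [qG]
    rw [if_neg (by omega), if_neg (by omega), if_neg (by omega)]
    simp

/-- The `q`-binomial theorem. The induction step splits off the factor `1 + x` of index `0` and
replaces `x` by `x r²` in the remaining ones. -/
lemma q_binomial {r : ℝ} (h0 : 0 < r) (h1 : r < 1) (M : ℕ) : ∀ x : ℝ,
    ∏ j ∈ Finset.range M, (1 + x * r ^ (2 * j)) =
      ∑ k ∈ Finset.range (M + 1), qG r M k * r ^ (k * (k - 1)) * x ^ k := by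
  induction M with
  | zero => intro x; simp [qG_zero h0 h1]
  | succ M ih =>
    intro x
    have hl : ∏ j ∈ Finset.range M, (1 + x * r ^ (2 * (j + 1))) =
        ∑ k ∈ Finset.range (M + 1), qG r M k * r ^ (k * (k - 1)) * (x * r ^ 2) ^ k := by
      rw [← ih]
      refine Finset.prod_congr rfl fun j _ => ?_
      ring
    have hz : qG r M (M + 1) = 0 := by simp [qG]
    have hext : ∑ k ∈ Finset.range (M + 1), qG r M k * r ^ (k * (k - 1)) * (x * r ^ 2) ^ k =
        ∑ k ∈ Finset.range (M + 2), qG r M k * r ^ (k * (k - 1)) * (x * r ^ 2) ^ k := by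
      rw [Finset.sum_range_succ _ (M + 1), hz]; simp
    rw [Finset.prod_range_succ', hl, mul_zero, pow_zero, mul_one, mul_add, mul_one]
    nth_rw 1 [hext]
    rw [Finset.sum_range_succ', Finset.sum_range_succ' _ (M + 1), Finset.sum_mul,
      add_right_comm, ← Finset.sum_add_distrib, qG_zero h0 h1, qG_zero h0 h1]
    simp only [pow_zero, zero_mul, mul_one]
    congr 1
    refine Finset.sum_congr rfl fun k _ => ?_
    rw [qG_succ h0 h1]
    have e : r ^ ((k + 1) * (k + 1 - 1)) = r ^ (k * (k - 1)) * r ^ (2 * k) := by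
      rw [← pow_add]
      congr 1
      cases k with
      | zero => rfl
      | succ k => simp; ring
    rw [e, mul_pow, mul_pow, ← pow_mul, ← pow_mul]
    ring

lemma reflect_prod {r z : ℝ} (hr : r ≠ 0) (hz : z ≠ 0) (N : ℕ) :
    ∏ j ∈ Finset.range N, (1 + z * (r ^ (2 * (j + 1)))⁻¹) =
      z ^ N * (r ^ (N * (N + 1)))⁻¹ * ∏ j ∈ Finset.range N, (1 + z⁻¹ * r ^ (2 * (j + 1))) := by
  induction N with
  | zero => simp
  | succ N ih =>
    rw [Finset.prod_range_succ, Finset.prod_range_succ, ih,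
      show (N + 1) * (N + 1 + 1) = N * (N + 1) + 2 * (N + 1) by ring, pow_add r]
    field_simp
    ring

/-- The finite form of the triple product: the `q`-binomial theorem with `2N` factors at
`x = z r^{-2N}`, whose first `N` factors are those in `z⁻¹` up to monomials. -/
lemma finite_jtp {r z : ℝ} (h0 : 0 < r) (h1 : r < 1) (hz : z ≠ 0) (N : ℕ) :
    (∏ j ∈ Finset.range N, (1 + z * r ^ (2 * j))) *
        ∏ j ∈ Finset.range N, (1 + z⁻¹ * r ^ (2 * (j + 1))) =
      ∑ k ∈ Finset.range (2 * N + 1), qG r (2 * N) k *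
        (r ^ (((k : ℤ) - N) * ((k : ℤ) - N - 1)) * z ^ ((k : ℤ) - N)) := by
  have hr := h0.ne'
  have hb := q_binomial h0 h1 (N + N) (z * (r ^ (2 * N))⁻¹)
  rw [Finset.prod_range_add, ← Finset.prod_range_reflect] at hb
  have e1 : ∏ j ∈ Finset.range N, (1 + z * (r ^ (2 * N))⁻¹ * r ^ (2 * (N - 1 - j))) =
      ∏ j ∈ Finset.range N, (1 + z * (r ^ (2 * (j + 1)))⁻¹) := by
    refine Finset.prod_congr rfl fun j hj => ?_
    have hj := Finset.mem_range.1 hj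
    have : r ^ (2 * N) = r ^ (2 * (N - 1 - j)) * r ^ (2 * (j + 1)) := by
      rw [← pow_add]; congr 1; omega
    rw [this]
    field_simp
  have e2 : ∏ j ∈ Finset.range N, (1 + z * (r ^ (2 * N))⁻¹ * r ^ (2 * (N + j))) =
      ∏ j ∈ Finset.range N, (1 + z * r ^ (2 * j)) := by
    refine Finset.prod_congr rfl fun j _ => ?_
    rw [mul_add, pow_add]
    field_simp
  rw [e1, e2, reflect_prod hr hz, ← two_mul] at hb
  have hsum : ∀ k : ℕ, r ^ (((k : ℤ) - N) * ((k : ℤ) - N - 1)) * z ^ ((k : ℤ) - N) =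
      r ^ (k * (k - 1)) * (z * (r ^ (2 * N))⁻¹) ^ k * (r ^ (N * (N + 1)) * (z ^ N)⁻¹) := by
    intro k
    have c1 : r ^ (k * (k - 1)) = r ^ ((k : ℤ) * (k - 1)) := by
      rw [← zpow_natCast]
      congr 1
      cases k <;> simp
    have c2 : r ^ (((k : ℤ) - N) * ((k : ℤ) - N - 1)) =
        r ^ ((k : ℤ) * (k - 1)) * (r ^ (2 * N * k))⁻¹ * r ^ (N * (N + 1)) := by
      rw [← zpow_natCast, ← zpow_natCast, ← zpow_neg, ← zpow_add₀ hr, ← zpow_add₀ hr]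
      congr 1
      push_cast
      ring
    rw [c1, c2, zpow_sub₀ hz, zpow_natCast, zpow_natCast, mul_pow, inv_pow, ← pow_mul]
    ring
  simp_rw [hsum, ← mul_assoc (qG _ _ _)]
  rw [← Finset.sum_mul, ← hb]
  field_simp

/-- The Jacobi triple product. The Gaussian binomials `[2N choose N + n]` are bounded by `P⁻²` and
tend to `P⁻¹` for each fixed `n`, so dominated convergence applies to the finite form. -/
lemma jtp {r z P A B : ℝ} (h0 : 0 < r) (h1 : r < 1) (hz : z ≠ 0)
    (hs : Summable fun n : ℤ => |r ^ (n * (n - 1)) * z ^ n|) (hP0 : 0 < P)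
    (hP : HasProd (fun i : ℕ => 1 - r ^ (2 * (i + 1))) P)
    (hA : HasProd (fun j : ℕ => 1 + z * r ^ (2 * j)) A)
    (hB : HasProd (fun j : ℕ => 1 + z⁻¹ * r ^ (2 * (j + 1))) B) :
    P * (A * B) = ∑' n : ℤ, r ^ (n * (n - 1)) * z ^ n := by
  have hqt : Tendsto (qP r) atTop (𝓝 P) := hP.tendsto_prod_nat
  have hanti : Antitone (qP r) := antitone_nat_of_succ_le fun n => by
    rw [qP_succ]
    exact mul_le_of_le_one_right (qP_pos h0 h1 n).le (by linarith [pow_pos h0 (2 * (n + 1))])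
  have hqle : ∀ n, P ≤ qP r n := fun n => hanti.le_of_tendsto hqt n
  have hq1 : ∀ n, qP r n ≤ 1 := fun n => by simpa [qP] using hanti (Nat.zero_le n)
  have hG : ∀ M k, |qG r M k| ≤ (P * P)⁻¹ := by
    intro M k
    unfold qG
    split_ifs
    · rw [abs_of_pos (div_pos (qP_pos h0 h1 _) (mul_pos (qP_pos h0 h1 _) (qP_pos h0 h1 _))),
        ← one_div]
      gcongr <;> first | exact hq1 _ | exact hqle _ | exact (qP_pos h0 h1 _).le
    · simp; positivity
  let t : ℤ → ℝ := fun n => r ^ (n * (n - 1)) * z ^ n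
  -- The terms of the finite identity, re-indexed by `n = k - N` and extended by zero to `ℤ`.
  let F : ℕ → ℤ → ℝ := fun N n =>
    if n ∈ Finset.Icc (-N : ℤ) N then qG r (2 * N) (n + N).toNat * t n else 0
  have hF : ∀ N : ℕ, ∑' n : ℤ, F N n = (∏ j ∈ Finset.range N, (1 + z * r ^ (2 * j))) *
        ∏ j ∈ Finset.range N, (1 + z⁻¹ * r ^ (2 * (j + 1))) := by
    intro N
    rw [finite_jtp h0 h1 hz, tsum_eq_sum (s := Finset.Icc (-N : ℤ) N)
      (fun n hn => if_neg hn)]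
    refine Finset.sum_nbij' (fun n => (n + N).toNat) (fun k => (k : ℤ) - N) ?_ ?_ ?_ ?_ ?_
    · intro n hn; simp only [Finset.mem_Icc, Finset.mem_range] at *; omega
    · intro n hn; simp only [Finset.mem_Icc, Finset.mem_range] at *; omega
    · intro n hn; simp only [Finset.mem_Icc] at *; omega
    · intro n hn; simp
    · intro n hn
      simp only [if_pos hn]
      have : (((n + N).toNat : ℕ) : ℤ) - N = n := by
        simp only [Finset.mem_Icc] at hn; omega
      rw [this]
  have hlim : Tendsto (fun N : ℕ => ∑' n : ℤ, F N n) atTop (𝓝 (∑' n : ℤ, P⁻¹ * t n)) := by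
    refine tendsto_tsum_of_dominated_convergence (hs.mul_left (P * P)⁻¹) ?_ ?_
    · intro n
      have l1 : Tendsto (fun N : ℕ => 2 * N) atTop atTop :=
        tendsto_atTop.2 fun b => (eventually_ge_atTop b).mono fun N hN => by omega
      have l2 : Tendsto (fun N : ℕ => (n + N).toNat) atTop atTop :=
        tendsto_atTop.2 fun b => (eventually_ge_atTop (b + n.natAbs)).mono fun N hN => by omega
      have l3 : Tendsto (fun N : ℕ => 2 * N - (n + N).toNat) atTop atTop :=
        tendsto_atTop.2 fun b => (eventually_ge_atTop (b + n.natAbs)).mono fun N hN => by omega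
      have := ((hqt.comp l1).div ((hqt.comp l2).mul (hqt.comp l3)) (by positivity)).mul_const (t n)
      rw [show P / (P * P) = P⁻¹ by field_simp] at this
      refine this.congr' ((eventually_ge_atTop n.natAbs).mono fun N hN => ?_)
      have hm : n ∈ Finset.Icc (-N : ℤ) N := by rw [Finset.mem_Icc]; omega
      simp only [F, if_pos hm, qG]
      rw [if_pos (by omega)]
      rfl
    · refine Eventually.of_forall fun N n => ?_
      simp only [F]
      split_ifs
      · rw [norm_mul]
        exact mul_le_mul_of_nonneg_right (hG _ _) (abs_nonneg _)
      · simp only [norm_zero]; positivity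
  have h2 : Tendsto (fun N : ℕ => ∑' n : ℤ, F N n) atTop (𝓝 (A * B)) := by
    simp_rw [hF]
    exact hA.tendsto_prod_nat.mul hB.tendsto_prod_nat
  rw [tendsto_nhds_unique h2 hlim, tsum_mul_left, ← mul_assoc, mul_inv_cancel₀ hP0.ne', one_mul]

/-! ### The continued fraction as a quotient of theta values -/

lemma exists_hasProd {u : ℕ → ℝ} (hu : Summable u) (h : ∀ i, u i < 1) :
    ∃ L > 0, HasProd (fun i => 1 - u i) L := by
  have hl := Real.summable_log_one_add_of_summable hu.neg
  refine ⟨exp (∑' i, log (1 + -u i)), exp_pos _,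
    Real.hasProd_of_hasSum_log (fun i => sub_pos.2 (h i)) ?_⟩
  simpa only [sub_eq_add_neg] using hl.hasSum

/-- The triple product with `r² = q⁵` and `z = -q^s`, where `q = exp(-2πa)`. Completing the square
gives `T` at `-(1/2 - s/5)`, and `T` is even in its second argument. -/
lemma prod_eq_thT {a : ℝ} (ha : 0 < a) (s : ℕ) (hs : s ≤ 5) {P A B : ℝ} (hP0 : 0 < P)
    (hP : HasProd (fun i : ℕ => 1 - exp (-5 * π * a) ^ (2 * (i + 1))) P)
    (hA : HasProd (fun j : ℕ => 1 - exp (-2 * π * a) ^ (5 * j + s)) A)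
    (hB : HasProd (fun j : ℕ => 1 - exp (-2 * π * a) ^ (5 * (j + 1) - s)) B) :
    P * (A * B) = exp (5 * π * a * (1 / 2 - s / 5) ^ 2) * thT (5 * a) (1 / 2 - s / 5) := by
  have hpa : 0 < π * a := by positivity
  have hr1 : exp (-5 * π * a) < 1 := exp_lt_one_iff.2 (by linarith)
  have hpow : ∀ k : ℕ, exp (-5 * π * a) ^ (2 * k) = exp (-2 * π * a) ^ (5 * k) := by
    intro k
    rw [← exp_nat_mul, ← exp_nat_mul]
    congr 1
    push_cast
    ring
  have hz : -exp (-2 * π * a) ^ s ≠ 0 := neg_ne_zero.2 (pow_ne_zero _ (exp_ne_zero _))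
  have hterm : ∀ n : ℤ, exp (-5 * π * a) ^ (n * (n - 1)) * (-exp (-2 * π * a) ^ s) ^ n =
      exp (5 * π * a * (1 / 2 - s / 5) ^ 2) *
        ((-1) ^ n * exp (-π * (5 * a) * (n + -(1 / 2 - s / 5)) ^ 2)) := by
    intro n
    have hexp : ∀ (x : ℝ) (m : ℤ), exp x ^ m = exp (m * x) := fun x m => by
      rw [mul_comm, exp_mul, rpow_intCast]
    rw [neg_eq_neg_one_mul (exp (-2 * π * a) ^ s), mul_zpow, ← exp_nat_mul, hexp, hexp, mul_left_comm,
      mul_left_comm (exp (5 * π * a * _)), ← exp_add, ← exp_add]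
    congr 2
    push_cast
    ring
  rw [jtp (exp_pos _) hr1 hz ?_ hP0 hP (hA.congr_fun ?_) (hB.congr_fun ?_), tsum_congr hterm,
    tsum_mul_left, ← thT_neg]
  · rfl
  · simp_rw [hterm]
    exact ((summable_thT (by positivity) _).mul_left _).abs
  · intro j
    rw [hpow, pow_add]
    ring
  · intro j
    rw [hpow, ← Nat.sub_add_cancel (show s ≤ 5 * (j + 1) by omega), pow_add, Nat.add_sub_cancel]
    have := pow_ne_zero s (exp_ne_zero (-2 * π * a))
    field_simp
    ring

/-- The prefactor `q^{1/5}` cancels exactly the constants left over from completing the squares in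
the numerator (`s = 1`) and the denominator (`s = 2`). -/
lemma rrcf_eq {a : ℝ} (ha : 0 < a) : 0 < thT (5 * a) (1 / 10) ∧
    rrcf (exp (-2 * π * a)) = thT (5 * a) (3 / 10) / thT (5 * a) (1 / 10) := by
  have hpa : 0 < π * a := by positivity
  have hq1 : exp (-2 * π * a) < 1 := exp_lt_one_iff.2 (by linarith)
  have hr1 : exp (-5 * π * a) < 1 := exp_lt_one_iff.2 (by linarith)
  have hprod : ∀ x : ℝ, 0 < x → x < 1 → ∀ e : ℕ → ℕ, (∀ i, i < e i) →
      ∃ L > 0, HasProd (fun i => 1 - x ^ e i) L := by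
    intro x h0 h1 e he
    refine exists_hasProd (Summable.of_nonneg_of_le (fun i => by positivity) (fun i => ?_)
      (summable_geometric_of_lt_one h0.le h1)) fun i => pow_lt_one₀ h0.le h1 (by have := he i; omega)
    exact pow_le_pow_of_le_one h0.le h1.le (he i).le
  obtain ⟨P, hP0, hP⟩ := hprod _ (exp_pos _) hr1 (fun i => 2 * (i + 1)) (fun i => by omega)
  obtain ⟨A₁, hA₁0, hA₁⟩ := hprod _ (exp_pos _) hq1 (fun i => 5 * i + 1) (fun i => by omega)
  obtain ⟨B₁, hB₁0, hB₁⟩ := hprod _ (exp_pos _) hq1 (fun i => 5 * (i + 1) - 1) (fun i => by omega)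
  obtain ⟨A₂, hA₂0, hA₂⟩ := hprod _ (exp_pos _) hq1 (fun i => 5 * i + 2) (fun i => by omega)
  obtain ⟨B₂, hB₂0, hB₂⟩ := hprod _ (exp_pos _) hq1 (fun i => 5 * (i + 1) - 2) (fun i => by omega)
  have j1 := prod_eq_thT ha 1 (by norm_num) hP0 hP hA₁ hB₁
  have j2 := prod_eq_thT ha 2 (by norm_num) hP0 hP hA₂ hB₂
  rw [show (1 / 2 - ((1 : ℕ) : ℝ) / 5) = 3 / 10 by norm_num] at j1
  rw [show (1 / 2 - ((2 : ℕ) : ℝ) / 5) = 1 / 10 by norm_num] at j2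
  have hpos : 0 < thT (5 * a) (1 / 10) := by
    have h : 0 < P * (A₂ * B₂) := by positivity
    rw [j2] at h
    exact pos_of_mul_pos_right h (exp_pos _).le
  refine ⟨hpos, ?_⟩
  have ht := ((hB₁.mul hA₁).div₀ (hB₂.mul hA₂) (by positivity)).tprod_eq
  have he1 : ∀ n, 5 * n + 1 = 5 * (n + 1) - 4 := fun n => by omega
  have he2 : ∀ n, 5 * n + 2 = 5 * (n + 1) - 3 := fun n => by omega
  simp only [he1, he2] at ht
  rw [rrcf, ht, ← exp_mul]
  have hx : exp (5 * π * a * (3 / 10) ^ 2) * exp (-2 * π * a * (1 / 5)) =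
      exp (5 * π * a * (1 / 10) ^ 2) := by
    rw [← exp_add]
    ring_nf
  rw [mul_div_assoc', div_eq_div_iff (by positivity) hpos.ne']
  have hne : P * exp (5 * π * a * (1 / 10) ^ 2) ≠ 0 := by positivity
  apply mul_left_cancel₀ hne
  linear_combination
    (exp (-2 * π * a * (1 / 5)) * exp (5 * π * a * (1 / 10) ^ 2) * thT (5 * a) (1 / 10)) * j1 -
      exp (5 * π * a * (1 / 10) ^ 2) * thT (5 * a) (3 / 10) * j2 +
      thT (5 * a) (3 / 10) * thT (5 * a) (1 / 10) * exp (5 * π * a * (1 / 10) ^ 2) * hx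

theorem rrcf_complementary_relation (a b : ℝ) (ha : 0 < a) (hb : 0 < b)
    (hab : a * b = 1) :
    ((Real.sqrt 5 + 1)/2 + rrcf (Real.exp (-2 * Real.pi * a))) *
      ((Real.sqrt 5 + 1)/2 + rrcf (Real.exp (-2 * Real.pi * b))) =
      (5 + Real.sqrt 5)/2 := by
  obtain ⟨hBa, hRa⟩ := rrcf_eq ha
  obtain ⟨hBb, hRb⟩ := rrcf_eq hb
  obtain ⟨h1, h3⟩ := thT_rel ha hb hab
  rw [hRa, hRb]
  have hs : √(5 * a) ≠ 0 := (sqrt_pos.2 (by positivity)).ne'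
  have h5 : √5 ^ 2 = 5 := sq_sqrt (by norm_num)
  generalize thT (5 * a) (1 / 10) = Ba at *
  generalize thT (5 * a) (3 / 10) = Aa at *
  generalize thT (5 * b) (1 / 10) = Bb at *
  generalize thT (5 * b) (3 / 10) = Ab at *
  generalize √(5 * a) = σ at *
  generalize cos (3 * (π / 10)) = c at *
  have key : ((√5 + 1) / 2 * Ba + Aa) * ((√5 + 1) / 2 * Bb + Ab) =
      (5 + √5) / 2 * (Ba * Bb) := by
    apply mul_left_cancel₀ hs
    linear_combination ((√5 + 1) / 2 * ((√5 + 1) / 2 * Bb + Ab) - (5 + √5) / 2 * Bb) * h1 +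
      ((√5 + 1) / 2 * Bb + Ab) * h3 + (c * Bb * ((√5 + 1) / 2 * Bb + Ab) / 2) * h5
  field_simp
  linear_combination 4 * key
end

section
/- If a and b are positive real numbers with a·b = 1/5, then (((√5+1)/2)^5 + R(e^{−2πa})^5) · (((√5+1)/2)^5 + R(e^{−2πb})^5) = 5·√5·((√5+1)/2)^5. -/
open Real

/-!
Write `E(q) = ∏ (1 - q^n)` and
`A(t) = ∑ (-1)^n t^{(5n²+n)/2}`, `B(t) = ∑ (-1)^n t^{(5n²+3n)/2}` (sums over `n ∈ ℤ`).

**Products.** The Jacobi triple product, obtained as the limit of its finite form (`finite_jtp`,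
`tendsto_jtp`), turns `A` and `B` into products. Hence `A(q) B(q) = E(q) E(q⁵)` (`A_mul_B`) and
`R(q) = q^{1/5} B(q) / A(q)` (`rrcf_pow_five`).

**Dissection.** `A(t) B(t)` is a double series over `ℤ²`. Split `ℤ²` into the five cosets of the
index-5 sublattice `{(2k - l, k + 2l)}`, which is multiplication by `2 + i` on the Gaussian
integers. Two cosets contribute zero by antisymmetry, and the others give (`dissection`)
`A(t) B(t) = A(t⁵)² - t A(t⁵) B(t⁵) - t² B(t⁵)²`,
that is, `1/R(t⁵) - 1 - R(t⁵) = E(t) / (t E(t²⁵))`.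
Replacing `t` by `ζ t` for each `ζ` with `ζ⁵ = 1` and multiplying the five relations gives
(`fifth_power_relation`), for `q = t⁵`,
`1/R(q)⁵ - 11 - R(q)⁵ = E(q)⁶ / (q E(q⁵)⁶)`.

**Modularity.** For `q = exp(-2πa)` call this quantity `W(a)`. Then `W(a)⁴ = Δ(ia) / Δ(5ia)`, and
`Δ(-1/τ) = τ¹² Δ(τ)` gives `W(a) W(b) = 125` when `ab = 1/5` (`W_mul_W`).

**Conclusion.** Put `s = √5`, `P = ((s+1)/2)⁵ = (11+5s)/2`, `p = 1/P = (5s-11)/2`, and let `x`, `y`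
be the fifth powers of the two values of `R`. The equation `W(a) W(b) = 125` is equivalent to
`((P+x)(P+y) - 5sP) ((p-x)(p-y) - 5sp) = 0`. Positivity of `W` forces `0 < x, y < p`, and `p < 5s`,
so the second factor is negative and the first one vanishes.
-/

namespace RR
open Filter Topology

/-! ### The Jacobi triple product -/

/-- The `q`-Pochhammer symbol `(Q; Q)_n = (1 - Q) (1 - Q²) ⋯ (1 - Qⁿ)`. -/
noncomputable def qP (Q : ℂ) (n : ℕ) : ℂ := ∏ i ∈ Finset.range n, (1 - Q ^ (i + 1))

/-- The reciprocal `1 / (Q; Q)_k`, extended by `0` to negative `k`. With this convention the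
recursion `qR_sub_one` holds for every integer `k`, so the `q`-binomial coefficients in
`finite_jtp` vanish automatically outside their range. -/
noncomputable def qR (Q : ℂ) (k : ℤ) : ℂ := if k < 0 then 0 else (qP Q k.toNat)⁻¹

/-- The general term `(-1)^j Q^{j(j-1)/2} z^j` of the Jacobi triple product series. -/
noncomputable def jt (Q z : ℂ) (j : ℤ) : ℂ := (-1) ^ j * Q ^ (j * (j - 1) / 2) * z ^ j

lemma one_sub_pow_ne_zero {Q : ℂ} (hQ : ‖Q‖ < 1) {n : ℕ} (hn : n ≠ 0) : 1 - Q ^ n ≠ 0 := by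
  intro h
  have h1 : ‖Q ^ n‖ = 1 := by rw [← sub_eq_zero.mp h]; simp
  rw [norm_pow] at h1
  exact absurd h1 (pow_lt_one₀ (norm_nonneg _) hQ hn).ne

lemma qP_ne_zero {Q : ℂ} (hQ : ‖Q‖ < 1) (n : ℕ) : qP Q n ≠ 0 :=
  Finset.prod_ne_zero_iff.mpr fun _ _ => one_sub_pow_ne_zero hQ (Nat.succ_ne_zero _)

lemma qR_sub_one {Q : ℂ} (hQ : ‖Q‖ < 1) (k : ℤ) : qR Q (k - 1) = (1 - Q ^ k) * qR Q k := by
  rcases lt_trichotomy k 0 with h | rfl | h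
  · simp [qR, h, show k - 1 < 0 by omega]
  · simp [qR]
  · obtain ⟨n, rfl⟩ : ∃ n : ℕ, k = n + 1 := ⟨(k - 1).toNat, by omega⟩
    have h1 : ((n : ℤ) + 1).toNat = n + 1 := by omega
    have h2 : ¬ ((n : ℤ) + 1 < 0) := by omega
    have h3 := qP_ne_zero hQ n
    have h4 := one_sub_pow_ne_zero hQ (Nat.succ_ne_zero n)
    have h5 : Q ^ ((n : ℤ) + 1) = Q ^ (n + 1) := by exact_mod_cast zpow_natCast Q (n + 1)
    simp only [qR, add_sub_cancel_right, h1, h2, if_false, Int.toNat_natCast, h5]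
    rw [if_neg (by omega), qP, qP, Finset.prod_range_succ]
    rw [qP] at h3
    rw [Nat.succ_eq_add_one] at h4
    field_simp

lemma jt_succ {Q z : ℂ} (hQ0 : Q ≠ 0) (hz : z ≠ 0) (j : ℤ) :
    jt Q z (j + 1) = -z * Q ^ j * jt Q z j := by
  have h : (j + 1) * (j + 1 - 1) / 2 = j + j * (j - 1) / 2 := by
    rw [show (j + 1) * (j + 1 - 1) = j * (j - 1) + j * 2 by ring,
      Int.add_mul_ediv_right _ _ two_ne_zero]
    ring
  rw [jt, jt, h, zpow_add₀ hQ0, zpow_add_one₀ hz, zpow_add_one₀ (by norm_num : (-1 : ℂ) ≠ 0)]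
  ring

/-- The finite Jacobi triple product: the coefficient of `jt Q z j` is the symmetric `q`-binomial
coefficient `(Q; Q)_{2N} / ((Q; Q)_{N+j} (Q; Q)_{N-j})`. The induction multiplies by the two new
factors one at a time; each step is a `q`-Pascal rule. -/
lemma finite_jtp {Q z : ℂ} (hQ : ‖Q‖ < 1) (hQ0 : Q ≠ 0) (hz : z ≠ 0) (N : ℕ) :
    HasSum (fun j : ℤ => qP Q (2 * N) * qR Q (N + j) * qR Q (N - j) * jt Q z j)
      (∏ k ∈ Finset.range N, (1 - z * Q ^ k) * (1 - Q ^ (k + 1) / z)) := by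
  induction N with
  | zero =>
    convert hasSum_single (f := fun j : ℤ => qP Q (2 * 0) * qR Q ((0 : ℕ) + j) *
      qR Q ((0 : ℕ) - j) * jt Q z j) 0 ?_ using 1
    · simp [qP, qR, jt]
    · intro j hj
      rcases lt_or_gt_of_ne hj with h | h
      · simp [qR, h]
      · simp [qR, h]
  | succ N ih =>
    rw [Finset.prod_range_succ]
    have A : HasSum (fun j : ℤ => qP Q (2 * N + 1) * qR Q (N + j) * qR Q (N + 1 - j) * jt Q z j)
        ((∏ k ∈ Finset.range N, (1 - z * Q ^ k) * (1 - Q ^ (k + 1) / z)) * (1 - z * Q ^ N)) := by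
      have h2 := ((Equiv.subRight (1 : ℤ)).hasSum_iff.mpr ih).mul_left (-z * Q ^ N)
      convert ih.add h2 using 1
      · funext j
        simp only [Function.comp, Equiv.subRight_apply]
        have e1 := jt_succ hQ0 hz (j - 1)
        have e2 := qR_sub_one hQ (N + j)
        have e3 := qR_sub_one hQ (N + 1 - j)
        rw [sub_add_cancel] at e1
        rw [show (N : ℤ) + (j - 1) = N + j - 1 by ring, show (N : ℤ) - (j - 1) = N + 1 - j by ring,
          show (N : ℤ) - j = N + 1 - j - 1 by ring, e1, e2, e3,
          show qP Q (2 * N + 1) = qP Q (2 * N) * (1 - Q ^ (2 * N + 1)) from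
            Finset.prod_range_succ _ _]
        rw [zpow_add₀ hQ0 (N : ℤ) j, zpow_sub₀ hQ0 ((N : ℤ) + 1) j, zpow_add₀ hQ0 (N : ℤ) 1,
          zpow_sub₀ hQ0 j 1]
        simp only [zpow_natCast, zpow_one]
        have := zpow_ne_zero j hQ0
        field_simp
        ring
      · ring
    have h2 := ((Equiv.addRight (1 : ℤ)).hasSum_iff.mpr A).mul_left (-Q ^ (N + 1) / z)
    convert A.add h2 using 1
    · funext j
      simp only [Function.comp, Equiv.coe_addRight]
      have e1 := jt_succ hQ0 hz j
      have e2 := qR_sub_one hQ (N + 1 + j)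
      have e3 := qR_sub_one hQ (N + 1 - j)
      push_cast
      rw [show (N : ℤ) + (j + 1) = N + 1 + j by ring,
        show (N : ℤ) + 1 - (j + 1) = N + 1 - j - 1 by ring, show (N : ℤ) + j = N + 1 + j - 1 by ring,
        e1, e2, e3,
        show qP Q (2 * (N + 1)) = qP Q (2 * N + 1) * (1 - Q ^ (2 * N + 1 + 1)) from
            Finset.prod_range_succ _ _]
      rw [zpow_add₀ hQ0, zpow_sub₀ hQ0, zpow_add₀ hQ0]
      simp only [zpow_natCast, zpow_one]
      have := zpow_ne_zero j hQ0
      field_simp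
      ring
    · ring

/-- The Euler product `E(q) = ∏_{n ≥ 1} (1 - q^n)`. -/
noncomputable def E (q : ℂ) : ℂ := ∏' n : ℕ, (1 - q ^ (n + 1))

lemma tendsto_qP {q : ℂ} (hq : ‖q‖ < 1) : Tendsto (qP q) atTop (𝓝 (E q)) :=
  (ModularForm.multipliable_one_sub_pow hq).hasProd.tendsto_prod_nat

lemma E_ne_zero {q : ℂ} (hq : ‖q‖ < 1) : E q ≠ 0 := by
  unfold E
  have := tprod_one_add_ne_zero_of_summable (f := fun n : ℕ => -q ^ (n + 1)) ?_ ?_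
  · simpa only [← sub_eq_add_neg] using this
  · intro n
    simpa only [← sub_eq_add_neg] using one_sub_pow_ne_zero hq (Nat.succ_ne_zero n)
  · simpa using (summable_nat_add_iff 1).mpr (summable_geometric_of_lt_one (norm_nonneg _) hq)

/-- The Jacobi triple product `∏ (1 - z Q^k) (1 - Q^{k+1} / z) = (∑ jt Q z j) / E(Q)`, as the limit
of `finite_jtp`; dominated convergence applies because the `q`-binomial coefficients are bounded
uniformly in `N` and `j`. -/
lemma tendsto_jtp {Q z : ℂ} (hQ : ‖Q‖ < 1) (hQ0 : Q ≠ 0) (hz : z ≠ 0)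
    (hs : Summable fun j : ℤ => ‖jt Q z j‖) :
    Tendsto (fun N => ∏ k ∈ Finset.range N, (1 - z * Q ^ k) * (1 - Q ^ (k + 1) / z)) atTop
      (𝓝 ((∑' j : ℤ, jt Q z j) / E Q)) := by
  have hE := E_ne_zero hQ
  have hinv : Tendsto (fun n => (qP Q n)⁻¹) atTop (𝓝 (E Q)⁻¹) := (tendsto_qP hQ).inv₀ hE
  obtain ⟨C, hC⟩ := (tendsto_qP hQ).norm.bddAbove_range
  obtain ⟨D, hD⟩ := hinv.norm.bddAbove_range
  have hC' : ∀ n, ‖qP Q n‖ ≤ C := fun n => hC ⟨n, rfl⟩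
  have hD' : ∀ n, ‖(qP Q n)⁻¹‖ ≤ D := fun n => hD ⟨n, rfl⟩
  have hC0 : 0 ≤ C := (norm_nonneg _).trans (hC' 0)
  have hD0 : 0 ≤ D := (norm_nonneg _).trans (hD' 0)
  have hR : ∀ k, ‖qR Q k‖ ≤ D := by
    intro k
    unfold qR
    split_ifs
    · simpa using hD0
    · exact hD' _
  have hlimR : ∀ j : ℤ, Tendsto (fun N : ℕ => qR Q (N + j)) atTop (𝓝 (E Q)⁻¹) := by
    intro j
    have h1 : Tendsto (fun N : ℕ => ((N : ℤ) + j).toNat) atTop atTop := by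
      refine tendsto_atTop.mpr fun b => ?_
      filter_upwards [eventually_ge_atTop (b + j.natAbs)] with N hN
      omega
    refine (hinv.comp h1).congr' ?_
    filter_upwards [eventually_ge_atTop j.natAbs] with N hN
    rw [qR, if_neg (by omega)]
    rfl
  have key := tendsto_tsum_of_dominated_convergence (𝓕 := atTop)
    (f := fun (N : ℕ) (j : ℤ) => qP Q (2 * N) * qR Q (N + j) * qR Q (N - j) * jt Q z j)
    (g := fun j : ℤ => E Q * (E Q)⁻¹ * (E Q)⁻¹ * jt Q z j)
    (bound := fun j : ℤ => C * D * D * ‖jt Q z j‖) (hs.mul_left _) ?_ ?_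
  · rw [tsum_mul_left] at key
    convert key using 1
    · funext N
      exact (finite_jtp hQ hQ0 hz N).tsum_eq.symm
    · congr 1
      field_simp
  · intro j
    have h2 : Tendsto (fun N : ℕ => qP Q (2 * N)) atTop (𝓝 (E Q)) :=
      (tendsto_qP hQ).comp (tendsto_id.const_mul_atTop' two_pos)
    have h3 : Tendsto (fun N : ℕ => qR Q (N - j)) atTop (𝓝 (E Q)⁻¹) := by
      simpa only [sub_eq_add_neg] using hlimR (-j)
    exact ((h2.mul (hlimR j)).mul h3).mul_const _
  · refine Eventually.of_forall fun N j => ?_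
    rw [norm_mul, norm_mul, norm_mul]
    gcongr
    · exact hC' _
    · exact hR _
    · exact hR _

/-! ### Five-dissection of the double series -/

/-- The general term `(-1)^n t^{(5n²+n)/2}` of `A`. The exponent is a nonnegative integer, so the
integer division is exact. -/
noncomputable def aT (t : ℂ) (n : ℤ) : ℂ := (-1) ^ n * t ^ ((5 * n ^ 2 + n) / 2)

/-- The general term `(-1)^n t^{(5n²+3n)/2}` of `B`. The integer division is exact. -/
noncomputable def bT (t : ℂ) (n : ℤ) : ℂ := (-1) ^ n * t ^ ((5 * n ^ 2 + 3 * n) / 2)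

/-- The theta series `A(t) = ∑_{n ∈ ℤ} (-1)^n t^{(5n²+n)/2}`. -/
noncomputable def A (t : ℂ) : ℂ := ∑' n : ℤ, aT t n

/-- The theta series `B(t) = ∑_{n ∈ ℤ} (-1)^n t^{(5n²+3n)/2}`. -/
noncomputable def B (t : ℂ) : ℂ := ∑' n : ℤ, bT t n

lemma summable_aux {t : ℂ} (ht : ‖t‖ < 1) (ht0 : t ≠ 0) (e : ℤ → ℤ) (he : ∀ n, |n| ≤ e n) :
    Summable fun n : ℤ => ‖(-1 : ℂ) ^ n * t ^ e n‖ := by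
  have hs : Summable fun n : ℤ => ‖t‖ ^ n.natAbs := by
    have := summable_geometric_of_lt_one (norm_nonneg _) ht
    refine Summable.of_nat_of_neg ?_ ?_ <;> simpa using this
  refine Summable.of_nonneg_of_le (fun _ => norm_nonneg _) (fun n => ?_) hs
  rw [norm_mul, norm_zpow, norm_zpow, norm_neg, norm_one, one_zpow, one_mul, ← zpow_natCast,
    Int.natCast_natAbs]
  exact zpow_le_zpow_right_of_le_one₀ (norm_pos_iff.mpr ht0) ht.le (he n)

lemma abs_le_sq (n : ℤ) : |n| ≤ n ^ 2 := by
  rw [← sq_abs]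
  rcases (abs_nonneg n).eq_or_lt with h | h
  · rw [← h]; simp
  · nlinarith

lemma summable_aT {t : ℂ} (ht : ‖t‖ < 1) (ht0 : t ≠ 0) : Summable fun n => ‖aT t n‖ := by
  refine summable_aux ht ht0 _ fun n => ?_
  have := abs_le_sq n
  have := neg_abs_le n
  have := abs_nonneg n
  omega

lemma summable_bT {t : ℂ} (ht : ‖t‖ < 1) (ht0 : t ≠ 0) : Summable fun n => ‖bT t n‖ := by
  refine summable_aux ht ht0 _ fun n => ?_
  have := abs_le_sq n
  have := neg_abs_le n
  have := abs_nonneg n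
  omega

lemma summable_aT_neg {t : ℂ} (ht : ‖t‖ < 1) (ht0 : t ≠ 0) :
    Summable fun n => ‖aT t (-n)‖ :=
  ((Equiv.neg ℤ).summable_iff (f := fun n => ‖aT t n‖)).mpr (summable_aT ht ht0)

lemma summable_bT_neg {t : ℂ} (ht : ‖t‖ < 1) (ht0 : t ≠ 0) :
    Summable fun n => ‖bT t (-n)‖ :=
  ((Equiv.neg ℤ).summable_iff (f := fun n => ‖bT t n‖)).mpr (summable_bT ht ht0)

lemma tsum_aT_neg (t : ℂ) : ∑' n, aT t (-n) = A t := (Equiv.neg ℤ).tsum_eq (aT t)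

lemma tsum_bT_neg (t : ℂ) : ∑' n, bT t (-n) = B t := (Equiv.neg ℤ).tsum_eq (bT t)

/-- The parametrisation `(i, (k, l)) ↦ (2k - l, k + 2l) + rᵢ` of `ℤ²`, where
`(0,0), (0,1), (1,0), (-1,0), (0,-1)` are representatives `rᵢ` of the five cosets of the sublattice
`{(2k - l, k + 2l)}`. -/
def cosetMap (p : Fin 5 × (ℤ × ℤ)) : ℤ × ℤ :=
  (2 * p.2.1 - p.2.2 + ![0, 0, 1, -1, 0] p.1, p.2.1 + 2 * p.2.2 + ![0, 1, 0, 0, -1] p.1)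

/-- The coset of `(m, n)` is determined by `2m + n` modulo 5. -/
lemma cosetMap_bijective : Function.Bijective cosetMap := by
  constructor
  · rintro ⟨i, k, l⟩ ⟨i', k', l'⟩ h
    simp only [cosetMap, Prod.mk.injEq] at h
    obtain ⟨h1, h2⟩ := h
    fin_cases i <;> fin_cases i' <;> simp at h1 h2 ⊢ <;> omega
  · rintro ⟨m, n⟩
    have h5 : (2 * m + n) % 5 = 0 ∨ (2 * m + n) % 5 = 1 ∨ (2 * m + n) % 5 = 2 ∨
      (2 * m + n) % 5 = 3 ∨ (2 * m + n) % 5 = 4 := by omega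
    rcases h5 with h | h | h | h | h
    · refine ⟨⟨0, (2 * m + n) / 5, (2 * n - m) / 5⟩, ?_⟩
      simp [cosetMap]; omega
    · refine ⟨⟨1, (2 * m + (n - 1)) / 5, (2 * (n - 1) - m) / 5⟩, ?_⟩
      simp [cosetMap]; omega
    · refine ⟨⟨2, (2 * (m - 1) + n) / 5, (2 * n - (m - 1)) / 5⟩, ?_⟩
      simp [cosetMap]; omega
    · refine ⟨⟨3, (2 * (m + 1) + n) / 5, (2 * n - (m + 1)) / 5⟩, ?_⟩
      simp [cosetMap]; omega
    · refine ⟨⟨4, (2 * m + (n + 1)) / 5, (2 * (n + 1) - m) / 5⟩, ?_⟩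
      simp [cosetMap]; omega

lemma even_a (n : ℤ) : ∃ c, 5 * n ^ 2 + n = 2 * c := by
  rcases Int.even_or_odd' n with ⟨k, rfl | rfl⟩
  · exact ⟨10 * k ^ 2 + k, by ring⟩
  · exact ⟨10 * k ^ 2 + 11 * k + 3, by ring⟩

lemma even_b (n : ℤ) : ∃ c, 5 * n ^ 2 + 3 * n = 2 * c := by
  obtain ⟨c, hc⟩ := even_a n
  exact ⟨c + n, by linarith⟩

/-- The signed monomial `(-1)^s t^e`; only the parity of `s` matters. -/
noncomputable def sm (t : ℂ) (s e : ℤ) : ℂ := (-1) ^ s * t ^ e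

lemma sm_mul {t : ℂ} (ht0 : t ≠ 0) (s e s' e' : ℤ) :
    sm t s e * sm t s' e' = sm t (s + s') (e + e') := by
  rw [sm, sm, sm, zpow_add₀ ht0, zpow_add₀ (by norm_num)]
  ring

lemma sm_congr (t : ℂ) {s e s' e' : ℤ} (hs : ∃ c, s = s' + 2 * c) (he : e = e') :
    sm t s e = sm t s' e' := by
  obtain ⟨c, rfl⟩ := hs
  rw [sm, sm, he, zpow_add₀ (by norm_num), zpow_mul]
  norm_num

lemma sm_neg (t : ℂ) {s e s' e' : ℤ} (hs : ∃ c, s = s' + 1 + 2 * c) (he : e = e') :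
    sm t s e = - sm t s' e' := by
  rw [sm_congr t hs he, sm, sm, zpow_add_one₀ (by norm_num)]
  ring

lemma aT_eq (t : ℂ) (n : ℤ) : aT t n = sm t n ((5 * n ^ 2 + n) / 2) := rfl
lemma bT_eq (t : ℂ) (n : ℤ) : bT t n = sm t n ((5 * n ^ 2 + 3 * n) / 2) := rfl

lemma sm_pow_five (t : ℂ) (s e : ℤ) : sm (t ^ 5) s e = sm t s (5 * e) := by
  rw [sm, sm, zpow_mul]; norm_cast

lemma aT_neg_eq (t : ℂ) (n : ℤ) : aT t (-n) = sm t n ((5 * n ^ 2 - n) / 2) := by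
  rw [aT_eq]; exact sm_congr t ⟨-n, by ring⟩ (by ring_nf)

lemma bT_neg_eq (t : ℂ) (n : ℤ) : bT t (-n) = sm t n ((5 * n ^ 2 - 3 * n) / 2) := by
  rw [bT_eq]; exact sm_congr t ⟨-n, by ring⟩ (by ring_nf)

/-- A series over `ℤ²` whose terms change sign under a permutation of the index set sums to zero. No
summability is needed, since `tsum` is invariant under permutations in all cases. -/
lemma tsum_eq_zero_of_swap {f : ℤ × ℤ → ℂ} (e : ℤ × ℤ ≃ ℤ × ℤ) (h : ∀ p, f (e p) = - f p) :
    ∑' p, f p = 0 := by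
  have h1 := e.tsum_eq f
  simp only [h, tsum_neg] at h1
  linear_combination (-1 / 2 : ℂ) * h1

/-- The general term of the double series `A(t) B(t)`. -/
noncomputable def F (t : ℂ) (p : ℤ × ℤ) : ℂ := aT t p.1 * bT t p.2

lemma F_cosetMap {t : ℂ} (ht0 : t ≠ 0) (i : Fin 5) (k l : ℤ) : F t (cosetMap (i, (k, l))) =
    sm t (2 * k - l + ![0, 0, 1, -1, 0] i + (k + 2 * l + ![0, 1, 0, 0, -1] i))
      ((5 * (2 * k - l + ![0, 0, 1, -1, 0] i) ^ 2 + (2 * k - l + ![0, 0, 1, -1, 0] i)) / 2 +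
       (5 * (k + 2 * l + ![0, 1, 0, 0, -1] i) ^ 2 + 3 * (k + 2 * l + ![0, 1, 0, 0, -1] i)) / 2) := by
  simp only [F, cosetMap, aT_eq, bT_eq, sm_mul ht0]

lemma coset_sum_0 {t : ℂ} (ht : ‖t‖ < 1) (ht0 : t ≠ 0) :
    ∑' p : ℤ × ℤ, F t (cosetMap (0, p)) = A (t ^ 5) ^ 2 := by
  have ht5 : ‖t ^ 5‖ < 1 := by
    rw [norm_pow]; exact pow_lt_one₀ (norm_nonneg _) ht (by norm_num)
  have ht50 : t ^ 5 ≠ 0 := pow_ne_zero _ ht0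
  have sa5 := summable_aT ht5 ht50
  rw [sq, A, tsum_mul_tsum_of_summable_norm sa5 sa5]
  refine tsum_congr fun ⟨k, l⟩ => ?_
  rw [F_cosetMap ht0, aT_eq, aT_eq, sm_pow_five, sm_pow_five, sm_mul ht0]
  simp only [Matrix.cons_val]
  apply sm_congr
  · exact ⟨k, by ring⟩
  · obtain ⟨c, hc⟩ := even_a k
    obtain ⟨d, hd⟩ := even_a l
    obtain ⟨c', hc'⟩ := even_a (2 * k - l + 0)
    obtain ⟨d', hd'⟩ := even_b (k + 2 * l + 0)
    rw [hc, hd, hc', hd']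
    simp only [Int.mul_ediv_cancel_left _ two_ne_zero]
    linarith

/-- This coset sum vanishes by antisymmetry under `l ↦ -1 - l`. -/
lemma coset_sum_1 {t : ℂ} (ht0 : t ≠ 0) :
    ∑' p : ℤ × ℤ, F t (cosetMap (1, p)) = 0 := by
  refine tsum_eq_zero_of_swap (Equiv.prodCongr (Equiv.refl ℤ) (Equiv.subLeft (-1))) ?_
  rintro ⟨k, l⟩
  simp only [Equiv.prodCongr_apply, Prod.map, Equiv.refl_apply, Equiv.subLeft_apply]
  rw [F_cosetMap ht0, F_cosetMap ht0]
  simp only [Matrix.cons_val]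
  apply sm_neg
  · exact ⟨- l - 1, by ring⟩
  · obtain ⟨c, hc⟩ := even_a (2 * k - l + 0)
    obtain ⟨d, hd⟩ := even_b (k + 2 * l + 1)
    obtain ⟨c', hc'⟩ := even_a (2 * k - (-1 - l) + 0)
    obtain ⟨d', hd'⟩ := even_b (k + 2 * (-1 - l) + 1)
    rw [hc, hd, hc', hd']
    simp only [Int.mul_ediv_cancel_left _ two_ne_zero]
    linarith

/-- This coset sum vanishes by antisymmetry under `k ↦ -1 - k`. -/
lemma coset_sum_2 {t : ℂ} (ht0 : t ≠ 0) :
    ∑' p : ℤ × ℤ, F t (cosetMap (2, p)) = 0 := by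
  refine tsum_eq_zero_of_swap (Equiv.prodCongr (Equiv.subLeft (-1)) (Equiv.refl ℤ)) ?_
  rintro ⟨k, l⟩
  simp only [Equiv.prodCongr_apply, Prod.map, Equiv.refl_apply, Equiv.subLeft_apply]
  rw [F_cosetMap ht0, F_cosetMap ht0]
  simp only [Matrix.cons_val]
  apply sm_neg
  · exact ⟨- 3 * k - 2, by ring⟩
  · obtain ⟨c, hc⟩ := even_a (2 * k - l + 1)
    obtain ⟨d, hd⟩ := even_b (k + 2 * l + 0)
    obtain ⟨c', hc'⟩ := even_a (2 * (-1 - k) - l + 1)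
    obtain ⟨d', hd'⟩ := even_b ((-1 - k) + 2 * l + 0)
    rw [hc, hd, hc', hd']
    simp only [Int.mul_ediv_cancel_left _ two_ne_zero]
    linarith

lemma coset_sum_3 {t : ℂ} (ht : ‖t‖ < 1) (ht0 : t ≠ 0) :
    ∑' p : ℤ × ℤ, F t (cosetMap (3, p)) = - t ^ 2 * B (t ^ 5) ^ 2 := by
  have ht5 : ‖t ^ 5‖ < 1 := by
    rw [norm_pow]; exact pow_lt_one₀ (norm_nonneg _) ht (by norm_num)
  have ht50 : t ^ 5 ≠ 0 := pow_ne_zero _ ht0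
  have sb5 := summable_bT ht5 ht50
  have sb5' := summable_bT_neg ht5 ht50
  rw [sq (B (t ^ 5))]
  nth_rw 1 [← tsum_bT_neg]
  rw [B, tsum_mul_tsum_of_summable_norm sb5' sb5, ← tsum_mul_left]
  refine tsum_congr fun ⟨k, l⟩ => ?_
  have e : -t ^ 2 = sm t 1 2 := by simp [sm]
  rw [F_cosetMap ht0, bT_neg_eq, bT_eq, sm_pow_five, sm_pow_five, e, sm_mul ht0, sm_mul ht0]
  simp only [Matrix.cons_val]
  apply sm_congr
  · exact ⟨k - 1, by ring⟩
  · obtain ⟨c, hc⟩ := even_b (-k)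
    obtain ⟨d, hd⟩ := even_b l
    obtain ⟨c', hc'⟩ := even_a (2 * k - l + -1)
    obtain ⟨d', hd'⟩ := even_b (k + 2 * l + 0)
    rw [show 5 * k ^ 2 - 3 * k = 2 * c by linarith, hd, hc', hd']
    simp only [Int.mul_ediv_cancel_left _ two_ne_zero]
    linarith

lemma coset_sum_4 {t : ℂ} (ht : ‖t‖ < 1) (ht0 : t ≠ 0) :
    ∑' p : ℤ × ℤ, F t (cosetMap (4, p)) = - t * (A (t ^ 5) * B (t ^ 5)) := by
  have ht5 : ‖t ^ 5‖ < 1 := by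
    rw [norm_pow]; exact pow_lt_one₀ (norm_nonneg _) ht (by norm_num)
  have ht50 : t ^ 5 ≠ 0 := pow_ne_zero _ ht0
  have sa5' := summable_aT_neg ht5 ht50
  have sb5' := summable_bT_neg ht5 ht50
  rw [← tsum_aT_neg, ← tsum_bT_neg, tsum_mul_tsum_of_summable_norm sa5' sb5', ← tsum_mul_left]
  refine tsum_congr fun ⟨k, l⟩ => ?_
  have e : -t = sm t 1 1 := by simp [sm]
  rw [F_cosetMap ht0, aT_neg_eq, bT_neg_eq, sm_pow_five, sm_pow_five, e, sm_mul ht0, sm_mul ht0]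
  simp only [Matrix.cons_val]
  apply sm_congr
  · exact ⟨k - 1, by ring⟩
  · obtain ⟨c, hc⟩ := even_a (-k)
    obtain ⟨d, hd⟩ := even_b (-l)
    obtain ⟨c', hc'⟩ := even_a (2 * k - l + 0)
    obtain ⟨d', hd'⟩ := even_b (k + 2 * l + -1)
    rw [show 5 * k ^ 2 - k = 2 * c by linarith, show 5 * l ^ 2 - 3 * l = 2 * d by linarith, hc', hd']
    simp only [Int.mul_ediv_cancel_left _ two_ne_zero]
    linarith

/-- The five-dissection of `A(t) B(t)`: the sum over `ℤ²` is split along the five cosets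
parametrised by `cosetMap`. -/
theorem dissection {t : ℂ} (ht : ‖t‖ < 1) (ht0 : t ≠ 0) :
    A t * B t = A (t ^ 5) ^ 2 - t * A (t ^ 5) * B (t ^ 5) - t ^ 2 * B (t ^ 5) ^ 2 := by
  have sa := summable_aT ht ht0
  have sb := summable_bT ht ht0
  have hS : Summable (F t) := summable_mul_of_summable_norm sa sb
  have hS' : Summable (F t ∘ Equiv.ofBijective _ cosetMap_bijective) :=
    (Equiv.summable_iff _).mpr hS
  have h1 : A t * B t = ∑ i : Fin 5, ∑' p : ℤ × ℤ, F t (cosetMap (i, p)) := by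
    rw [A, B, tsum_mul_tsum_of_summable_norm sa sb]
    change ∑' p, F t p = _
    rw [← (Equiv.ofBijective _ cosetMap_bijective).tsum_eq]
    exact hS'.tsum_prod.trans (tsum_fintype _)
  rw [h1, Fin.sum_univ_five, coset_sum_0 ht ht0, coset_sum_1 ht0, coset_sum_2 ht0,
    coset_sum_3 ht ht0, coset_sum_4 ht ht0]
  ring

/-! ### Product formulas and the continued fraction -/

lemma jt_eq_aT {q : ℂ} (hq0 : q ≠ 0) (j : ℤ) : jt (q ^ 5) (q ^ 3) j = aT q j := by
  have h : (q ^ 5) ^ (j * (j - 1) / 2) * (q ^ 3) ^ j = q ^ ((5 * j ^ 2 + j) / 2) := by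
    rw [← zpow_natCast q 5, ← zpow_natCast q 3, ← zpow_mul, ← zpow_mul, ← zpow_add₀ hq0]
    congr 1
    obtain ⟨c, hc⟩ := even_a j
    obtain ⟨d, hd⟩ : ∃ d, j * (j - 1) = 2 * d := ⟨c - 2 * j ^ 2 - j, by linarith⟩
    rw [hc, hd]
    simp only [Int.mul_ediv_cancel_left _ two_ne_zero]
    push_cast
    linarith
  rw [jt, aT, ← h]; ring

lemma jt_eq_bT {q : ℂ} (hq0 : q ≠ 0) (j : ℤ) : jt (q ^ 5) (q ^ 4) j = bT q j := by
  have h : (q ^ 5) ^ (j * (j - 1) / 2) * (q ^ 4) ^ j = q ^ ((5 * j ^ 2 + 3 * j) / 2) := by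
    rw [← zpow_natCast q 5, ← zpow_natCast q 4, ← zpow_mul, ← zpow_mul, ← zpow_add₀ hq0]
    congr 1
    obtain ⟨c, hc⟩ := even_b j
    obtain ⟨d, hd⟩ : ∃ d, j * (j - 1) = 2 * d := ⟨c - 2 * j ^ 2 - 2 * j, by linarith⟩
    rw [hc, hd]
    simp only [Int.mul_ediv_cancel_left _ two_ne_zero]
    push_cast
    linarith
  rw [jt, bT, ← h]; ring

lemma norm_pow_five_lt {q : ℂ} (hq : ‖q‖ < 1) : ‖q ^ 5‖ < 1 := by
  rw [norm_pow]; exact pow_lt_one₀ (norm_nonneg _) hq (by norm_num)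

lemma tendsto_A {q : ℂ} (hq : ‖q‖ < 1) (hq0 : q ≠ 0) :
    Tendsto (fun N => ∏ k ∈ Finset.range N, (1 - q ^ (5 * k + 3)) * (1 - q ^ (5 * k + 2))) atTop
      (𝓝 (A q / E (q ^ 5))) := by
  have := tendsto_jtp (norm_pow_five_lt hq) (pow_ne_zero 5 hq0) (pow_ne_zero 3 hq0)
    (by simpa only [jt_eq_aT hq0] using summable_aT hq hq0)
  simp only [jt_eq_aT hq0] at this
  convert this using 5 with N k hk
  · ring
  · field_simp
    ring
  · rfl

lemma tendsto_B {q : ℂ} (hq : ‖q‖ < 1) (hq0 : q ≠ 0) :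
    Tendsto (fun N => ∏ k ∈ Finset.range N, (1 - q ^ (5 * k + 4)) * (1 - q ^ (5 * k + 1))) atTop
      (𝓝 (B q / E (q ^ 5))) := by
  have := tendsto_jtp (norm_pow_five_lt hq) (pow_ne_zero 5 hq0) (pow_ne_zero 4 hq0)
    (by simpa only [jt_eq_bT hq0] using summable_bT hq hq0)
  simp only [jt_eq_bT hq0] at this
  convert this using 5 with N k hk
  · ring
  · field_simp
    ring
  · rfl

lemma qP_five_succ (q : ℂ) (N : ℕ) : qP q (5 * (N + 1)) = qP q (5 * N) * ((1 - q ^ (5 * N + 1)) *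
    (1 - q ^ (5 * N + 2)) * (1 - q ^ (5 * N + 3)) * (1 - q ^ (5 * N + 4)) *
    (1 - q ^ (5 * N + 5))) := by
  simp only [qP, mul_add, Finset.prod_range_succ, mul_one]
  ring

lemma tendsto_qP_five {q : ℂ} (hq : ‖q‖ < 1) :
    Tendsto (fun N => qP q (5 * N)) atTop (𝓝 (E q)) :=
  (tendsto_qP hq).comp (tendsto_id.const_mul_atTop' (by norm_num))

/-- The products for `A(q)`, `B(q)` and `E(q⁵)` run over the residue classes `±2`, `±1` and `0`
modulo 5, which together make up `E(q)`. -/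
lemma A_mul_B {q : ℂ} (hq : ‖q‖ < 1) (hq0 : q ≠ 0) : A q * B q = E q * E (q ^ 5) := by
  have hE := E_ne_zero (norm_pow_five_lt hq)
  have h1 := ((tendsto_A hq hq0).mul (tendsto_B hq hq0)).mul (tendsto_qP (norm_pow_five_lt hq))
  have h2 : (fun N => (∏ k ∈ Finset.range N, (1 - q ^ (5 * k + 3)) * (1 - q ^ (5 * k + 2))) *
      (∏ k ∈ Finset.range N, (1 - q ^ (5 * k + 4)) * (1 - q ^ (5 * k + 1))) * qP (q ^ 5) N) =
      fun N => qP q (5 * N) := by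
    funext N
    induction N with
    | zero => simp [qP]
    | succ N ih =>
      rw [qP_five_succ, ← ih]
      simp only [qP, Finset.prod_range_succ]
      ring
  rw [h2] at h1
  have h3 := tendsto_nhds_unique h1 (tendsto_qP_five hq)
  rw [← h3]
  field_simp

lemma A_ne_zero {q : ℂ} (hq : ‖q‖ < 1) (hq0 : q ≠ 0) : A q ≠ 0 := by
  intro h
  have := A_mul_B hq hq0
  rw [h, zero_mul] at this
  exact mul_ne_zero (E_ne_zero hq) (E_ne_zero (norm_pow_five_lt hq)) this.symm

/-- Convergence of the product over one residue class modulo 5, needed to split the infinite product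
of quotients in `rrcf`. -/
lemma real_multipliable {q : ℝ} (h0 : 0 < q) (h1 : q < 1) (c : ℕ) (hc : c ≠ 0) :
    Multipliable (fun n : ℕ => 1 - q ^ (5 * n + c)) ∧ ∏' n : ℕ, (1 - q ^ (5 * n + c)) ≠ 0 := by
  have hs : Summable fun n : ℕ => ‖-q ^ (5 * n + c)‖ := by
    have := (summable_geometric_of_lt_one (r := q ^ 5) (by positivity)
      (pow_lt_one₀ h0.le h1 (by norm_num))).mul_right (q ^ c)
    refine this.congr fun n => ?_
    rw [norm_neg, Real.norm_of_nonneg (by positivity), pow_add, pow_mul]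
  simp only [sub_eq_add_neg]
  refine ⟨multipliable_one_add_of_summable hs, tprod_one_add_ne_zero_of_summable ?_ hs⟩
  intro n
  have := pow_lt_one₀ h0.le h1 (n := 5 * n + c) (by omega)
  linarith

/-- `R(q) = q^{1/5} B(q) / A(q)`, written for `q = t⁵`, `t = q^{1/5}`. -/
lemma rrcf_pow_five {t : ℝ} (h0 : 0 < t) (h1 : t < 1) :
    ((rrcf (t ^ 5) : ℝ) : ℂ) = t * (B ((t : ℂ) ^ 5) / A ((t : ℂ) ^ 5)) := by
  set q : ℝ := t ^ 5 with hq
  have hq0 : 0 < q := by positivity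
  have hq1 : q < 1 := pow_lt_one₀ h0.le h1 (by norm_num)
  have hqn : ‖(q : ℂ)‖ < 1 := by
    rwa [Complex.norm_real, Real.norm_of_nonneg hq0.le]
  have hqc : (q : ℂ) ≠ 0 := by exact_mod_cast hq0.ne'
  obtain ⟨m1, n1⟩ := real_multipliable hq0 hq1 1 (by norm_num)
  obtain ⟨m2, n2⟩ := real_multipliable hq0 hq1 2 (by norm_num)
  obtain ⟨m3, n3⟩ := real_multipliable hq0 hq1 3 (by norm_num)
  obtain ⟨m4, n4⟩ := real_multipliable hq0 hq1 4 (by norm_num)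
  have hm := (m4.hasProd.mul m1.hasProd).div₀ (m3.hasProd.mul m2.hasProd) (mul_ne_zero n3 n2)
  have ht : q ^ ((1 : ℝ) / 5) = t := by
    rw [hq, ← Real.rpow_natCast, ← Real.rpow_mul h0.le]
    norm_num
  have hr : rrcf q = t * ∏' n : ℕ, ((1 - q ^ (5 * n + 4)) * (1 - q ^ (5 * n + 1)) /
      ((1 - q ^ (5 * n + 3)) * (1 - q ^ (5 * n + 2)))) := by
    rw [rrcf, ht]
    rfl
  have hlim := (Complex.continuous_ofReal.tendsto _).comp hm.tendsto_prod_nat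
  have hlim2 := (tendsto_B hqn hqc).div (tendsto_A hqn hqc)
    (div_ne_zero (A_ne_zero hqn hqc) (E_ne_zero (norm_pow_five_lt hqn)))
  have hu := tendsto_nhds_unique hlim (hlim2.congr fun N => ?_)
  · rw [hr, hm.tprod_eq, Complex.ofReal_mul, hu,
      div_div_div_cancel_right₀ (E_ne_zero (norm_pow_five_lt hqn))]
    simp [hq]
  · simp [Finset.prod_div_distrib]

/-! ### Multiplication over the fifth roots of unity -/

lemma prod_roots {ω : ℂ} (h : IsPrimitiveRoot ω 5) (X Y : ℂ) :
    ∏ k ∈ Finset.range 5, (X - ω ^ k * Y) = X ^ 5 - Y ^ 5 := by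
  have h0 := h.geom_sum_eq_zero (by norm_num)
  have h5 := h.pow_eq_one
  simp only [Finset.sum_range_succ, Finset.prod_range_succ, Finset.sum_range_zero,
    Finset.prod_range_zero] at h0 ⊢
  grind

/-- Each quadratic factors over `ℚ(√5)` as `(X - ω^k φ Y) (X - ω^k (1 - φ) Y)` with `φ` the golden
ratio, so the product is `(X⁵ - φ⁵ Y⁵) (X⁵ - (1 - φ)⁵ Y⁵)`; here `φ⁵ + (1 - φ)⁵ = 11` and
`φ (1 - φ) = -1`. -/
lemma prod_quadratic {ω : ℂ} (h : IsPrimitiveRoot ω 5) (X Y : ℂ) :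
    ∏ k ∈ Finset.range 5, (X ^ 2 - ω ^ k * (X * Y) - (ω ^ k) ^ 2 * Y ^ 2) =
      X ^ 10 - 11 * (X * Y) ^ 5 - Y ^ 10 := by
  have hs : ((√5 : ℝ) : ℂ) ^ 2 = 5 := by
    rw [← Complex.ofReal_pow, Real.sq_sqrt (by norm_num)]; norm_num
  set s : ℂ := ((√5 : ℝ) : ℂ)
  obtain ⟨u, hu⟩ : ∃ u : ℂ, u = (1 + s) / 2 := ⟨_, rfl⟩
  have hu2 : u ^ 2 = u + 1 := by rw [hu]; linear_combination hs / 4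
  have e : ∀ k ∈ Finset.range 5, X ^ 2 - ω ^ k * (X * Y) - (ω ^ k) ^ 2 * Y ^ 2 =
      (X - ω ^ k * (u * Y)) * (X - ω ^ k * ((1 - u) * Y)) := by
    intro k _
    linear_combination (ω ^ k) ^ 2 * Y ^ 2 * hu2
  rw [Finset.prod_congr rfl e, Finset.prod_mul_distrib, prod_roots h, prod_roots h]
  have h5 : u ^ 5 = 5 * u + 3 := by grind
  have h5' : (1 - u) ^ 5 = 8 - 5 * u := by grind
  rw [mul_pow, mul_pow, h5, h5']
  linear_combination (-25 * Y ^ 10) * hu2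

/-- `∏_k E(ω^k t) = E(t⁵)⁶ / E(t²⁵)`: for `n` prime to 5 the factors `1 - (ω^k t)^n` multiply to
`1 - t^{5n}`, and for `5 ∣ n` they are all equal to `1 - t^n`. -/
lemma prod_E {ω t : ℂ} (h : IsPrimitiveRoot ω 5) (ht : ‖t‖ < 1) :
    (∏ k ∈ Finset.range 5, E (ω ^ k * t)) * E ((t ^ 5) ^ 5) = E (t ^ 5) ^ 6 := by
  have hn : ∀ k : ℕ, ‖ω ^ k * t‖ < 1 := by
    intro k
    rwa [norm_mul, norm_pow, h.norm'_eq_one (by norm_num), one_pow, one_mul]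
  have ht5 := norm_pow_five_lt ht
  have fac : ∀ n : ℕ, n.Coprime 5 →
      ∏ k ∈ Finset.range 5, (1 - (ω ^ k * t) ^ n) = 1 - (t ^ 5) ^ n := by
    intro n hc
    have := prod_roots (h.pow_of_coprime n hc) 1 (t ^ n)
    rw [one_pow, ← pow_mul, mul_comm n 5, pow_mul] at this
    rw [← this]
    refine Finset.prod_congr rfl fun k _ => ?_
    rw [mul_pow, ← pow_mul, ← pow_mul, mul_comm k n]
  have fac5 : ∀ N : ℕ, ∏ k ∈ Finset.range 5, (1 - (ω ^ k * t) ^ (5 * N + 5)) =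
      (1 - (t ^ 5) ^ (N + 1)) ^ 5 := by
    intro N
    rw [← Finset.card_range 5, ← Finset.prod_const, Finset.card_range]
    refine Finset.prod_congr rfl fun k _ => ?_
    rw [mul_pow, ← pow_mul, ← pow_mul, show k * (5 * N + 5) = 5 * (k * (N + 1)) by ring,
      pow_mul ω 5, h.pow_eq_one, one_pow, one_mul]
    rfl
  have fin : ∀ N : ℕ, (∏ k ∈ Finset.range 5, qP (ω ^ k * t) (5 * N)) * qP ((t ^ 5) ^ 5) N =
      qP (t ^ 5) (5 * N) * qP (t ^ 5) N ^ 5 := by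
    intro N
    induction N with
    | zero => simp [qP]
    | succ N ih =>
      have e1 : qP ((t ^ 5) ^ 5) (N + 1) = qP ((t ^ 5) ^ 5) N * (1 - (t ^ 5) ^ (5 * N + 5)) := by
        rw [qP, Finset.prod_range_succ, ← qP, ← pow_mul (t ^ 5) 5]; rfl
      have e2 : qP (t ^ 5) (N + 1) = qP (t ^ 5) N * (1 - (t ^ 5) ^ (N + 1)) :=
        Finset.prod_range_succ _ _
      simp only [qP_five_succ, Finset.prod_mul_distrib, fac5]
      have hc : ∀ i : ℕ, i.Coprime 5 → (5 * N + i).Coprime 5 := fun i hi => by simpa using hi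
      rw [e1, e2, fac _ (hc 1 (by norm_num)), fac _ (hc 2 (by norm_num)),
        fac _ (hc 3 (by norm_num)), fac _ (hc 4 (by norm_num))]
      linear_combination (1 - (t ^ 5) ^ (5 * N + 1)) * (1 - (t ^ 5) ^ (5 * N + 2)) *
        (1 - (t ^ 5) ^ (5 * N + 3)) * (1 - (t ^ 5) ^ (5 * N + 4)) * (1 - (t ^ 5) ^ (5 * N + 5)) *
        (1 - (t ^ 5) ^ (N + 1)) ^ 5 * ih
  have l1 := (tendsto_finsetProd (Finset.range 5) fun k _ => tendsto_qP_five (hn k)).mul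
    (tendsto_qP (norm_pow_five_lt ht5))
  have l2 := (tendsto_qP_five ht5).mul ((tendsto_qP ht5).pow 5)
  rw [tendsto_nhds_unique l1 (l2.congr fun N => (fin N).symm)]
  ring

/-- `1/x - 11 - x = E(q)⁶ / (q E(q⁵)⁶)` for `x = R(q)⁵`, `q = t⁵`, with denominators cleared. -/
lemma fifth_power_relation {t : ℝ} (h0 : 0 < t) (h1 : t < 1) :
    (1 - 11 * ((rrcf (t ^ 5) : ℝ) : ℂ) ^ 5 - (((rrcf (t ^ 5) : ℝ) : ℂ) ^ 5) ^ 2) *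
      ((t : ℂ) ^ 5 * E (((t : ℂ) ^ 5) ^ 5) ^ 6) =
      ((rrcf (t ^ 5) : ℝ) : ℂ) ^ 5 * E ((t : ℂ) ^ 5) ^ 6 := by
  rw [rrcf_pow_five h0 h1]
  have htn : ‖(t : ℂ)‖ < 1 := by rwa [Complex.norm_real, Real.norm_of_nonneg h0.le]
  have htc : (t : ℂ) ≠ 0 := by exact_mod_cast h0.ne'
  generalize (t : ℂ) = t at htn htc
  have hω := Complex.isPrimitiveRoot_exp 5 (by norm_num)
  set ω := Complex.exp (2 * π * Complex.I / (5 : ℕ))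
  have hq := norm_pow_five_lt htn
  have hq0 := pow_ne_zero 5 htc
  have hAB := A_mul_B hq hq0
  have hA := A_ne_zero hq hq0
  have hE := E_ne_zero hq
  have key : ∀ k ∈ Finset.range 5, E (ω ^ k * t) * E (t ^ 5) =
      A (t ^ 5) ^ 2 - ω ^ k * (A (t ^ 5) * (t * B (t ^ 5))) -
        (ω ^ k) ^ 2 * (t * B (t ^ 5)) ^ 2 := by
    intro k _
    have hn : ‖ω ^ k * t‖ < 1 := by
      rwa [norm_mul, norm_pow, hω.norm'_eq_one (by norm_num), one_pow, one_mul]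
    have hn0 : ω ^ k * t ≠ 0 := mul_ne_zero (pow_ne_zero _ (hω.ne_zero (by norm_num))) htc
    have h5 : (ω ^ k * t) ^ 5 = t ^ 5 := by
      rw [mul_pow, ← pow_mul, mul_comm k 5, pow_mul, hω.pow_eq_one, one_pow, one_mul]
    have d := dissection hn hn0
    rw [A_mul_B hn hn0, h5] at d
    rw [d]; ring
  have hp := Finset.prod_congr rfl key
  rw [prod_quadratic hω, Finset.prod_mul_distrib, Finset.prod_const, Finset.card_range] at hp
  have hE5 := prod_E hω htn
  set q := t ^ 5 with hqdef
  have e1 : (t * (B q / A q)) ^ 5 * A q ^ 10 = q * (E q * E (q ^ 5)) ^ 5 := by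
    rw [← hAB, hqdef]; field_simp
  have e2 : (1 - 11 * (t * (B q / A q)) ^ 5 - ((t * (B q / A q)) ^ 5) ^ 2) * A q ^ 10 =
      A q ^ 10 - 11 * (A q * (t * B q)) ^ 5 - (t * B q) ^ 10 := by
    field_simp
  set x := (t * (B q / A q)) ^ 5
  have hne : A q ^ 10 * E q ^ 5 ≠ 0 := mul_ne_zero (pow_ne_zero _ hA) (pow_ne_zero _ hE)
  apply mul_right_cancel₀ hne
  calc _ = ((1 - 11 * x - x ^ 2) * A q ^ 10) * E (q ^ 5) * (q * (E q * E (q ^ 5)) ^ 5) := by ring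
    _ = _ := by
      rw [e2, ← hp, ← e1]
      linear_combination (E q ^ 5 * x * A q ^ 10) * hE5

/-! ### Modular transformation -/

lemma E_real_pos {q : ℝ} (h0 : 0 < q) (h1 : q < 1) : ∃ e : ℝ, 0 < e ∧ E (q : ℂ) = e := by
  have hqn : ‖(q : ℂ)‖ < 1 := by rwa [Complex.norm_real, Real.norm_of_nonneg h0.le]
  have hlim := tendsto_qP hqn
  have hr : ∀ N, ((∏ i ∈ Finset.range N, (1 - q ^ (i + 1)) : ℝ) : ℂ) = qP q N := by
    intro N; simp [qP]
  have hre := (Complex.continuous_re.tendsto _).comp hlim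
  have him := (Complex.continuous_im.tendsto _).comp hlim
  have h2 : (E (q : ℂ)).im = 0 := by
    refine tendsto_nhds_unique him (tendsto_const_nhds.congr fun N => ?_)
    rw [Function.comp, ← hr, Complex.ofReal_im]
  have h3 : 0 ≤ (E (q : ℂ)).re := by
    refine ge_of_tendsto' hre fun N => ?_
    rw [Function.comp, ← hr, Complex.ofReal_re]
    exact Finset.prod_nonneg fun i _ => sub_nonneg.mpr (pow_le_one₀ h0.le h1.le)
  have h4 : E (q : ℂ) = ((E (q : ℂ)).re : ℝ) := Complex.ext (by simp) (by simp [h2])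
  refine ⟨_, lt_of_le_of_ne h3 fun h => E_ne_zero hqn ?_, h4⟩
  rw [h4, ← h]; simp

/-- The modular discriminant on the imaginary axis: `D a = Δ(ia) = q E(q)²⁴` for `q = exp(-2πa)`. -/
noncomputable def D (a : ℝ) : ℂ :=
  ((Real.exp (-2 * π * a) : ℝ) : ℂ) * E ((Real.exp (-2 * π * a) : ℝ) : ℂ) ^ 24

lemma eta_pow (a : ℝ) : ModularForm.eta (Complex.I * a) ^ 24 = D a := by
  have h : ∀ h : ℝ, Function.Periodic.qParam h (Complex.I * a) =
      Complex.exp (((-2 * π * a / h : ℝ)) : ℂ) := by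
    intro h
    rw [Function.Periodic.qParam]
    congr 1
    push_cast
    linear_combination (2 * π * a / h : ℂ) * Complex.I_sq
  rw [ModularForm.eta, mul_pow, D, E]
  simp only [ModularForm.eta_q, h]
  rw [← Complex.exp_nat_mul, div_one, Complex.ofReal_exp]
  congr 2
  push_cast
  ring

/-- `Δ(i/c) = c¹² Δ(ic)`: the transformation `Δ(-1/τ) = τ¹² Δ(τ)` at `τ = ic`. -/
lemma D_inv {c : ℝ} (hc : 0 < c) : D (1 / c) = c ^ 12 * D c := by
  have hz : 0 < (Complex.I * c).im := by simpa using hc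
  set z : UpperHalfPlane := ⟨Complex.I * c, hz⟩ with hzdef
  have hzc : (z : ℂ) = Complex.I * c := rfl
  have hc0 : (c : ℂ) ≠ 0 := by exact_mod_cast hc.ne'
  have h := congrFun ModularForm.discriminant_S_invariant z
  have h2 : ModularForm.eta (-(z : ℂ)⁻¹) ^ 24 * ((z : ℂ) ^ 12)⁻¹ = ModularForm.eta z ^ 24 := by
    rw [ModularForm.SL_slash_apply, UpperHalfPlane.modular_S_smul, ModularGroup.denom_S,
      ModularForm.discriminant, ModularForm.discriminant, UpperHalfPlane.coe_mk, zpow_neg] at h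
    rw [← inv_neg]
    exact h
  have h3 : -(z : ℂ)⁻¹ = Complex.I * ((1 / c : ℝ) : ℂ) := by
    rw [hzc, mul_inv, Complex.inv_I]; push_cast; ring
  have h4 : (z : ℂ) ^ 12 = c ^ 12 := by
    rw [hzc, mul_pow, show 12 = 4 * 3 by norm_num, pow_mul Complex.I, Complex.I_pow_four]; simp
  rw [h3, h4, hzc, eta_pow, eta_pow] at h2
  rw [← h2]
  field_simp

/-- `W(a) = 1/x - 11 - x` with `x = R(exp(-2πa))⁵`, as a single fraction. -/
noncomputable def W (a : ℝ) : ℝ :=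
  (1 - 11 * rrcf (Real.exp (-2 * π * a)) ^ 5 - (rrcf (Real.exp (-2 * π * a)) ^ 5) ^ 2) /
    rrcf (Real.exp (-2 * π * a)) ^ 5

/-- The nome `exp(-2πa)` is `t⁵` with `t = exp(-2πa/5)`. -/
lemma exp_facts {a : ℝ} (ha : 0 < a) : ∃ t : ℝ, 0 < t ∧ t < 1 ∧ Real.exp (-2 * π * a) = t ^ 5 ∧
    Real.exp (-2 * π * (5 * a)) = (t ^ 5) ^ 5 := by
  refine ⟨Real.exp (-2 * π * a / 5), Real.exp_pos _, ?_, ?_, ?_⟩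
  · rw [Real.exp_lt_one_iff]
    have := mul_pos Real.pi_pos ha
    linarith
  · rw [← Real.exp_nat_mul]; congr 1; push_cast; ring
  · rw [← Real.exp_nat_mul, ← Real.exp_nat_mul]; congr 1; push_cast; ring

/-- `R > 0`, `W(a) > 0` and `W(a)⁴ = Δ(ia) / Δ(5ia)`, because `W(a) = E(q)⁶ / (q E(q⁵)⁶)` for
`q = exp(-2πa)`. -/
lemma W_facts {a : ℝ} (ha : 0 < a) : 0 < rrcf (Real.exp (-2 * π * a)) ∧ 0 < W a ∧
    (W a : ℂ) ^ 4 * D (5 * a) = D a := by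
  obtain ⟨t, h0, h1, e1, e5⟩ := exp_facts ha
  have hq0 : 0 < t ^ 5 := by positivity
  have hq1 : t ^ 5 < 1 := pow_lt_one₀ h0.le h1 (by norm_num)
  have hr : 0 < rrcf (t ^ 5) := by
    have hnn : 0 ≤ rrcf (t ^ 5) := by
      have hf : ∀ m, 0 ≤ 1 - (t ^ 5) ^ m := fun m => sub_nonneg.mpr (pow_le_one₀ hq0.le hq1.le)
      refine mul_nonneg (by positivity) (tprod_nonneg fun n => ?_)
      exact div_nonneg (mul_nonneg (hf _) (hf _)) (mul_nonneg (hf _) (hf _))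
    -- `R = 0` would turn `fifth_power_relation` into `q E(q⁵)⁶ = 0`.
    refine lt_of_le_of_ne hnn fun h => ?_
    have hk := fifth_power_relation h0 h1
    have htn : ‖(t : ℂ)‖ < 1 := by rwa [Complex.norm_real, Real.norm_of_nonneg h0.le]
    have htc : (t : ℂ) ≠ 0 := by exact_mod_cast h0.ne'
    have := E_ne_zero (norm_pow_five_lt (norm_pow_five_lt htn))
    rw [← h] at hk
    simp [htc, this] at hk
  obtain ⟨e, he, hE⟩ := E_real_pos hq0 hq1
  obtain ⟨e', he', hE'⟩ := E_real_pos (q := (t ^ 5) ^ 5) (by positivity)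
    (pow_lt_one₀ hq0.le hq1 (by norm_num))
  have hk := fifth_power_relation h0 h1
  push_cast at hE hE'
  rw [hE, hE'] at hk
  have hk' : (1 - 11 * rrcf (t ^ 5) ^ 5 - (rrcf (t ^ 5) ^ 5) ^ 2) * (t ^ 5 * e' ^ 6) =
      rrcf (t ^ 5) ^ 5 * e ^ 6 := by exact_mod_cast hk
  have hW : W a = e ^ 6 / (t ^ 5 * e' ^ 6) := by
    rw [W, e1, div_eq_div_iff (by positivity) (by positivity), hk']; ring
  refine ⟨by rwa [e1], by rw [hW]; positivity, ?_⟩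
  rw [D, D, e1, e5]
  push_cast
  rw [hE, hE', hW]
  have : (e' : ℂ) ≠ 0 := by exact_mod_cast he'.ne'
  have htc : (t : ℂ) ≠ 0 := by exact_mod_cast h0.ne'
  push_cast
  field_simp

/-- When `ab = 1/5`, inversion exchanges `ia` with `5ib` and `5ia` with `ib`, so the quotients of
discriminants for `a` and `b` cancel up to the factor `5¹²`. -/
lemma W_mul_W {a b : ℝ} (ha : 0 < a) (hb : 0 < b) (hab : a * b = 1 / 5) : W a * W b = 125 := by
  obtain ⟨-, wa, ea⟩ := W_facts ha
  obtain ⟨-, wb, eb⟩ := W_facts hb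
  have hD : ∀ c : ℝ, 0 < c → D c ≠ 0 := by
    intro c hc
    obtain ⟨t, h0, h1, e1, -⟩ := exp_facts hc
    obtain ⟨e, he, hE⟩ := E_real_pos (q := t ^ 5) (by positivity)
      (pow_lt_one₀ h0.le h1 (by norm_num))
    rw [D, e1, hE]
    exact mul_ne_zero (by exact_mod_cast (by positivity : t ^ 5 ≠ 0))
      (pow_ne_zero _ (by exact_mod_cast he.ne'))
  have hb1 : b = 1 / (5 * a) := by field_simp; linarith
  have hb5 : 5 * b = 1 / a := by field_simp; linarith
  have i1 := D_inv (c := 5 * a) (by positivity)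
  have i2 := D_inv ha
  rw [← hb1] at i1
  rw [← hb5] at i2
  rw [i1, i2] at eb
  have hac : (a : ℂ) ≠ 0 := by exact_mod_cast ha.ne'
  have h : ((W a : ℂ) * W b) ^ 4 = 125 ^ 4 := by
    apply mul_right_cancel₀ (mul_ne_zero (mul_ne_zero (hD a ha) (hD (5 * a) (by positivity)))
      (pow_ne_zero 12 hac))
    calc _ = ((W a : ℂ) ^ 4 * D (5 * a)) * ((W b : ℂ) ^ 4 * (a ^ 12 * D a)) := by ring
      _ = _ := by rw [ea, eb]; push_cast; ring
  have h' : (W a * W b) ^ 4 = 125 ^ 4 := by exact_mod_cast h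
  exact (pow_left_inj₀ (mul_pos wa wb).le (by norm_num) (by norm_num)).mp h'

end RR

/-! ### The complementary relation -/

theorem rrcf_complementary_relation_fifth_power (a b : ℝ) (ha : 0 < a) (hb : 0 < b)
    (hab : a * b = 1/5) :
    (((Real.sqrt 5 + 1)/2)^5 + (rrcf (Real.exp (-2 * Real.pi * a)))^5) *
      (((Real.sqrt 5 + 1)/2)^5 + (rrcf (Real.exp (-2 * Real.pi * b)))^5) =
      5 * Real.sqrt 5 * ((Real.sqrt 5 + 1)/2)^5 := by
  have hW := RR.W_mul_W ha hb hab
  obtain ⟨ra, wa, -⟩ := RR.W_facts ha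
  obtain ⟨rb, wb, -⟩ := RR.W_facts hb
  unfold RR.W at hW wa wb
  have hx : 0 < rrcf (Real.exp (-2 * π * a)) ^ 5 := by positivity
  have hy : 0 < rrcf (Real.exp (-2 * π * b)) ^ 5 := by positivity
  generalize rrcf (Real.exp (-2 * π * a)) ^ 5 = x at *
  generalize rrcf (Real.exp (-2 * π * b)) ^ 5 = y at *
  have hs : √5 ^ 2 = 5 := Real.sq_sqrt (by norm_num)
  have hs2 : 2 < √5 := by
    rw [Real.lt_sqrt] <;> norm_num
  have hφ : ((√5 + 1) / 2) ^ 5 = (11 + 5 * √5) / 2 := by grind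
  rw [hφ]
  have fa : (1 - 11 * x - x ^ 2) > 0 := (div_pos_iff_of_pos_right hx).mp wa
  have fb : (1 - 11 * y - y ^ 2) > 0 := (div_pos_iff_of_pos_right hy).mp wb
  rw [div_mul_div_comm, div_eq_iff (by positivity)] at hW
  -- `(5√5 - 11) / 2` is the positive root of `1 - 11 x - x²`.
  have hxp : x < (5 * √5 - 11) / 2 := by nlinarith
  have hyp : y < (5 * √5 - 11) / 2 := by nlinarith
  generalize √5 = s at *
  -- `hW` in factored form; the second factor is the conjugate of the first under `√5 ↦ -√5`.
  have hprod : (((11 + 5 * s) / 2 + x) * ((11 + 5 * s) / 2 + y) - 5 * s * ((11 + 5 * s) / 2)) *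
      (((5 * s - 11) / 2 - x) * ((5 * s - 11) / 2 - y) - 5 * s * ((5 * s - 11) / 2)) = 0 := by
    grind
  have hneg : ((5 * s - 11) / 2 - x) * ((5 * s - 11) / 2 - y) - 5 * s * ((5 * s - 11) / 2) < 0 := by
    nlinarith
  exact sub_eq_zero.mp ((mul_eq_zero.mp hprod).resolve_right hneg.ne)
end

section
/- For every real q with 0 < q < 1, (∑_{λ∈ℤ} (−1)^λ q^{λ(5λ+3)/2}) / (∑_{λ∈ℤ} (−1)^λ q^{λ(5λ+1)/2}) = ∏_{n=1}^∞ (1−q^{5n−1})(1−q^{5n−4}) / ((1−q^{5n−2})(1−q^{5n−3})). (This is the identity from Jacobi's triple product expressing the Rogers–Ramanujan continued fraction as an infinite product.) -/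
/-! The Jacobi triple product is proved here from its finite form. Write `P m = ∏_{i < m} (1 - Q ^ (i + 1))`,
let `r m = 1 / P m` for `m ≥ 0` and `r m = 0` for `m < 0`, and put `a j = (-1) ^ j Q ^ (j (j - 1) / 2) x ^ j`. Then
`∑_{j ∈ ℤ} a j * r (N + j) * r (N - j) = (∏_{k < N} (1 - Q ^ k x) (1 - Q ^ (k + 1) / x)) / P (2 N)`
(`hasSum_finite_jtp`). The proof is by induction on `N`: multiplying by the next two factors of the product shifts `j` by one,
and the coefficients match because of `a (j + 1) = -Q ^ j x a j` and `r (m - 1) = (1 - Q ^ m) r m`, which hold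
for all integers `j` and `m`.

As `N → ∞`, Tannery's theorem lets the sum converge to `(∑ a j) / L ^ 2`, where `L` is the nonzero limit of `P`; hence
`∏_{k < N} (1 - Q ^ k x) (1 - Q ^ (k + 1) / x)` tends to `(∑ a j) / L` (`tendsto_jtp`).
Taking `Q = q ^ 5` and `x = q ^ 4`, resp. `x = q ^ 3`, produces the numerator, resp. the denominator, of the claim, and the
common factor `L` cancels in the quotient. -/

open Real

open Filter Topology

/-- The finite `Q`-Pochhammer product `(Q; Q)_m = ∏_{i < m} (1 - Q ^ (i + 1))`. -/
noncomputable def qfac (Q : ℝ) (m : ℕ) : ℝ := ∏ i ∈ Finset.range m, (1 - Q ^ (i + 1))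

/-- The reciprocal `1 / (Q; Q)_m`, extended by zero to negative `m`. With this extension, the recurrence
`qrec_sub_one` holds at every integer. -/
noncomputable def qrec (Q : ℝ) (m : ℤ) : ℝ := if m < 0 then 0 else (qfac Q m.toNat)⁻¹

/-- The general term `(-1) ^ j Q ^ (j (j - 1) / 2) x ^ j` of the theta series in the Jacobi triple product. -/
noncomputable def thetaTerm (Q x : ℝ) (j : ℤ) : ℝ := (-1) ^ j * Q ^ (j * (j - 1) / 2) * x ^ j

lemma one_sub_pow_pos {Q : ℝ} (h0 : 0 < Q) (h1 : Q < 1) {n : ℕ} (hn : n ≠ 0) : 0 < 1 - Q ^ n :=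
  sub_pos.2 (pow_lt_one₀ h0.le h1 hn)

lemma qfac_pos {Q : ℝ} (h0 : 0 < Q) (h1 : Q < 1) (m : ℕ) : 0 < qfac Q m :=
  Finset.prod_pos fun i _ => one_sub_pow_pos h0 h1 i.succ_ne_zero

lemma qfac_succ (Q : ℝ) (m : ℕ) : qfac Q (m + 1) = qfac Q m * (1 - Q ^ (m + 1)) :=
  Finset.prod_range_succ _ _

lemma qrec_sub_one {Q : ℝ} (h0 : 0 < Q) (h1 : Q < 1) (m : ℤ) :
    qrec Q (m - 1) = (1 - Q ^ m) * qrec Q m := by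
  rcases lt_trichotomy m 0 with h | rfl | h
  · simp [qrec, h, show m - 1 < 0 by omega]
  · simp [qrec]
  · obtain ⟨n, rfl⟩ : ∃ n : ℕ, m = n + 1 := ⟨(m - 1).toNat, by omega⟩
    have e : ((n : ℤ) + 1).toNat = n + 1 := by omega
    have hz : Q ^ ((n : ℤ) + 1) = Q ^ (n + 1) := by exact_mod_cast zpow_natCast Q (n + 1)
    have h2 := (one_sub_pow_pos h0 h1 n.succ_ne_zero).ne'
    have h3 := (qfac_pos h0 h1 n).ne'
    simp only [qrec, add_sub_cancel_right, e, hz, qfac_succ, Int.toNat_natCast]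
    rw [if_neg (by omega), if_neg (by omega)]
    field_simp

lemma thetaTerm_succ {Q x : ℝ} (hQ : Q ≠ 0) (hx : x ≠ 0) (j : ℤ) :
    thetaTerm Q x (j + 1) = -(Q ^ j * x) * thetaTerm Q x j := by
  have e : (j + 1) * (j + 1 - 1) / 2 = j * (j - 1) / 2 + j := by
    rw [show (j + 1) * (j + 1 - 1) = j * (j - 1) + j * 2 by ring]
    exact Int.add_mul_ediv_right _ _ two_ne_zero
  simp only [thetaTerm, e, zpow_add₀ hQ, zpow_add₀ hx, zpow_add₀ (show (-1 : ℝ) ≠ 0 by norm_num)]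
  simp; ring

/-- The finite form of the Jacobi triple product. -/
lemma hasSum_finite_jtp {Q x : ℝ} (h0 : 0 < Q) (h1 : Q < 1) (hx : 0 < x) (N : ℕ) :
    HasSum (fun j : ℤ => thetaTerm Q x j * (qrec Q (N + j) * qrec Q (N - j)))
      ((∏ k ∈ Finset.range N, (1 - Q ^ k * x) * (1 - Q ^ (k + 1) / x)) / qfac Q (2 * N)) := by
  induction N with
  | zero =>
    have h : ∀ j : ℤ, j ≠ 0 →
        thetaTerm Q x j * (qrec Q ((0 : ℕ) + j) * qrec Q ((0 : ℕ) - j)) = 0 := by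
      intro j hj
      rcases lt_or_gt_of_ne hj with h | h
      · simp [qrec, h]
      · simp [qrec, h]
    simpa [thetaTerm, qrec, qfac] using hasSum_single (0 : ℤ) h
  | succ N ih =>
    set S := (∏ k ∈ Finset.range N, (1 - Q ^ k * x) * (1 - Q ^ (k + 1) / x)) / qfac Q (2 * N)
      with hS
    set f : ℤ → ℝ := fun j => thetaTerm Q x j * (qrec Q (N + j) * qrec Q (N - j)) with hf
    have hl : HasSum (fun j => f (j - 1)) S := (Equiv.hasSum_iff (f := f) (Equiv.subRight (1 : ℤ))).2 ih
    have hr : HasSum (fun j => f (j + 1)) S := (Equiv.hasSum_iff (f := f) (Equiv.addRight (1 : ℤ))).2 ih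
    have hp := one_sub_pow_pos h0 h1 (n := 2 * N + 1) (by omega)
    have hp' := one_sub_pow_pos h0 h1 (n := 2 * N + 2) (by omega)
    have hq := qfac_pos h0 h1 (2 * N)
    -- `(1 - Q ^ N x) (1 - Q ^ (N + 1) / x)` is expanded, and its `x`- and `x⁻¹`-terms act as index shifts.
    have key : HasSum (fun j => ((1 + Q ^ (2 * N + 1)) * f j - Q ^ N * x * f (j - 1)
          - Q ^ (N + 1) / x * f (j + 1)) / ((1 - Q ^ (2 * N + 1)) * (1 - Q ^ (2 * N + 2))))
        (((1 + Q ^ (2 * N + 1)) * S - Q ^ N * x * S - Q ^ (N + 1) / x * S)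
          / ((1 - Q ^ (2 * N + 1)) * (1 - Q ^ (2 * N + 2)))) := (((ih.mul_left (1 + Q ^ (2 * N + 1))).sub (hl.mul_left (Q ^ N * x))).sub
      (hr.mul_left (Q ^ (N + 1) / x))).div_const ((1 - Q ^ (2 * N + 1)) * (1 - Q ^ (2 * N + 2)))
    convert key using 1
    · funext j
      rw [eq_div_iff (by positivity)]
      have t1 := thetaTerm_succ h0.ne' hx.ne' j
      have t2 := thetaTerm_succ h0.ne' hx.ne' (j - 1)
      rw [sub_add_cancel] at t2
      have r1 := qrec_sub_one h0 h1 (N + 1 + j)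
      have r2 := qrec_sub_one h0 h1 (N + 1 - j)
      have r3 := qrec_sub_one h0 h1 (N + j)
      have r4 := qrec_sub_one h0 h1 (N - j)
      rw [show (N : ℤ) + 1 + j - 1 = N + j by ring] at r1
      rw [show (N : ℤ) + 1 - j - 1 = N - j by ring] at r2
      simp only [hf]
      push_cast
      rw [show (N : ℤ) + (j - 1) = N + j - 1 by ring, show (N : ℤ) - (j - 1) = N + 1 - j by ring,
        show (N : ℤ) + (j + 1) = N + 1 + j by ring, show (N : ℤ) - (j + 1) = N - j - 1 by ring,
        r3, r4, r1, r2, t1, t2]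
      simp only [zpow_add₀ h0.ne', zpow_sub₀ h0.ne', zpow_natCast, zpow_one]
      have hj : Q ^ j ≠ 0 := zpow_ne_zero _ h0.ne'
      have hQ := h0.ne'
      field_simp
      ring
    · rw [hS, Finset.prod_range_succ, show 2 * (N + 1) = 2 * N + 1 + 1 by ring, qfac_succ, qfac_succ]
      field_simp
      ring_nf

lemma summable_thetaTerm {Q x : ℝ} (h0 : 0 < Q) (h1 : Q < 1) (hx : 0 < x) :
    Summable (thetaTerm Q x) := by
  have hne : ∀ j, thetaTerm Q x j ≠ 0 := fun j => by
    unfold thetaTerm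
    have := zpow_ne_zero j (show (-1 : ℝ) ≠ 0 by norm_num)
    positivity
  have hQ := tendsto_pow_atTop_nhds_zero_of_lt_one h0.le h1
  -- in both directions the ratio of consecutive terms tends to zero
  apply Summable.of_nat_of_neg
  · refine summable_of_ratio_test_tendsto_lt_one one_pos (.of_forall fun n => hne n)
      (l := 0) ?_ |>.congr fun n => rfl
    have := hQ.mul_const x
    rw [zero_mul] at this
    refine this.congr fun n => ?_
    push_cast
    rw [thetaTerm_succ h0.ne' hx.ne', norm_mul, mul_div_cancel_right₀ _ (norm_ne_zero_iff.2 (hne _)),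
      norm_neg, zpow_natCast, Real.norm_of_nonneg (by positivity)]
  · refine summable_of_ratio_test_tendsto_lt_one one_pos (.of_forall fun n => hne (-n))
      (l := 0) ?_ |>.congr fun n => rfl
    have := ((tendsto_add_atTop_iff_nat 1).2 hQ).div_const x
    rw [zero_div] at this
    refine this.congr fun n => ?_
    have e := thetaTerm_succ h0.ne' hx.ne' (-((n + 1 : ℕ) : ℤ))
    rw [show -((n + 1 : ℕ) : ℤ) + 1 = -n by push_cast; ring] at e
    have h := norm_ne_zero_iff.2 (hne (-((n + 1 : ℕ) : ℤ)))
    have hpos : 0 ≤ (Q ^ (n + 1))⁻¹ * x := by positivity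
    rw [e, norm_mul, norm_neg, zpow_neg, zpow_natCast, Real.norm_of_nonneg hpos, mul_comm,
      div_mul_cancel_left₀ h, mul_inv, inv_inv, div_eq_mul_inv]

/-- A product `∏ (1 - q ^ e n)` with `e n ≥ n + 1` converges to a nonzero number. -/
lemma exists_hasProd_one_sub_pow {q : ℝ} (h0 : 0 < q) (h1 : q < 1) (e : ℕ → ℕ)
    (he : ∀ n, n + 1 ≤ e n) : ∃ L : ℝ, L ≠ 0 ∧ HasProd (fun n => 1 - q ^ e n) L := by
  have hs : Summable fun n => ‖-q ^ e n‖ := by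
    refine (summable_geometric_of_lt_one h0.le h1).of_nonneg_of_le (fun n => norm_nonneg _) fun n => ?_
    rw [norm_neg, Real.norm_of_nonneg (by positivity)]
    exact pow_le_pow_of_le_one h0.le h1.le (by have := he n; omega)
  have hm := (multipliable_one_add_of_summable hs).hasProd
  have hn := tprod_one_add_ne_zero_of_summable (f := fun n => -q ^ e n) (fun n => by
    have := one_sub_pow_pos h0 h1 (n := e n) (by have := he n; omega)
    rw [← sub_eq_add_neg]; exact this.ne') hs
  simp only [← sub_eq_add_neg] at hm hn
  exact ⟨_, hn, hm⟩

/-- The limiting form of the Jacobi triple product, with `L = (Q; Q)_∞`. -/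
lemma tendsto_jtp {Q x L : ℝ} (h0 : 0 < Q) (h1 : Q < 1) (hx : 0 < x) (hL : L ≠ 0)
    (hP : Tendsto (qfac Q) atTop (𝓝 L)) :
    Tendsto (fun N => ∏ k ∈ Finset.range N, (1 - Q ^ k * x) * (1 - Q ^ (k + 1) / x)) atTop
      (𝓝 ((∑' j, thetaTerm Q x j) / L)) := by
  have hinv : Tendsto (fun m => (qfac Q m)⁻¹) atTop (𝓝 L⁻¹) := hP.inv₀ hL
  obtain ⟨C, hC⟩ : ∃ C, ∀ m, ‖qrec Q m‖ ≤ C := by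
    obtain ⟨C, hC⟩ := (Metric.isBounded_range_of_tendsto _ hinv).exists_norm_le
    refine ⟨C, fun m => ?_⟩
    have hC' : ∀ n, ‖(qfac Q n)⁻¹‖ ≤ C := fun n => hC _ ⟨n, rfl⟩
    unfold qrec
    split_ifs
    · simpa using (norm_nonneg _).trans (hC' 0)
    · exact hC' _
  have hr : Tendsto (qrec Q) atTop (𝓝 L⁻¹) := by
    have ht : Tendsto Int.toNat atTop atTop :=
      tendsto_atTop.2 fun b => (eventually_ge_atTop (b : ℤ)).mono fun m hm => by omega
    refine (hinv.comp ht).congr' ((eventually_ge_atTop 0).mono fun m hm => ?_)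
    simp [qrec, not_lt.2 hm]
  have hcast : Tendsto (fun N : ℕ => (N : ℤ)) atTop atTop := tendsto_natCast_atTop_atTop
  have hlim : Tendsto (fun N : ℕ => ∑' j : ℤ, thetaTerm Q x j * (qrec Q (N + j) * qrec Q (N - j)))
      atTop (𝓝 (∑' j, thetaTerm Q x j * (L⁻¹ * L⁻¹))) := by
    refine tendsto_tsum_of_dominated_convergence
      (bound := fun j => ‖thetaTerm Q x j‖ * (C * C)) ?_ ?_ ?_
    · exact (summable_thetaTerm h0 h1 hx).norm.mul_right _
    · intro j
      exact ((hr.comp (tendsto_atTop_add_const_right _ j hcast)).mul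
        (hr.comp (tendsto_atTop_add_const_right _ (-j) hcast))).const_mul _
    · refine .of_forall fun N j => ?_
      rw [norm_mul, norm_mul]
      have := (norm_nonneg _).trans (hC 0)
      gcongr <;> apply hC
  have h2 : Tendsto (fun N => qfac Q (2 * N)) atTop (𝓝 L) :=
    hP.comp (tendsto_id.const_mul_atTop' two_pos)
  convert (hlim.mul h2).congr fun N => ?_ using 2
  · rw [tsum_mul_right]
    field_simp
  · rw [(hasSum_finite_jtp h0 h1 hx N).tsum_eq, div_mul_cancel₀ _ (qfac_pos h0 h1 _).ne']

/-- The specialization `Q = q ^ 5`, `x = q ^ s` of the theta term. -/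
lemma thetaTerm_pow {q : ℝ} (h0 : 0 < q) (s : ℕ) (t : ℤ) (hst : 2 * (s : ℤ) = t + 5) (j : ℤ) :
    thetaTerm (q ^ 5) (q ^ s) j = (-1) ^ j * q ^ (j * (5 * j + t) / 2) := by
  have e : j * (5 * j + t) / 2 = 5 * (j * (j - 1) / 2) + s * j := by
    obtain ⟨k, hk⟩ : (2 : ℤ) ∣ j * (j - 1) := (Int.even_mul_pred_self j).two_dvd
    have h : j * (5 * j + t) = 2 * (5 * k + s * j) := by
      linear_combination 5 * hk - j * hst
    rw [h, hk, Int.mul_ediv_cancel_left _ two_ne_zero, Int.mul_ediv_cancel_left _ two_ne_zero]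
  rw [thetaTerm, e, zpow_add₀ h0.ne', zpow_mul, zpow_mul, zpow_natCast, mul_assoc]
  norm_cast

theorem rrcf_series_eq_product (q : ℝ) (hq0 : 0 < q) (hq1 : q < 1) :
    (∑' n : ℤ, (-1 : ℝ) ^ n * q ^ (n * (5*n + 3) / 2)) /
      (∑' n : ℤ, (-1 : ℝ) ^ n * q ^ (n * (5*n + 1) / 2)) =
    ∏' n : ℕ,
      (1 - q ^ (5*(n+1) - 1)) * (1 - q ^ (5*(n+1) - 4)) /
      ((1 - q ^ (5*(n+1) - 2)) * (1 - q ^ (5*(n+1) - 3))) := by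
  have hQ0 : 0 < q ^ 5 := by positivity
  have hQ1 : q ^ 5 < 1 := pow_lt_one₀ hq0.le hq1 (by norm_num)
  obtain ⟨L, hL, hP⟩ := exists_hasProd_one_sub_pow hQ0 hQ1 (fun n => n + 1) fun n => le_rfl
  have hP' : Tendsto (qfac (q ^ 5)) atTop (𝓝 L) := hP.tendsto_prod_nat
  have ex := fun i (hi : i ≤ 4) =>
    exists_hasProd_one_sub_pow hq0 hq1 (fun n => 5 * (n + 1) - i) fun n => by omega
  obtain ⟨T₁, hT₁, h₁⟩ := ex 1 (by norm_num)
  obtain ⟨T₂, hT₂, h₂⟩ := ex 2 (by norm_num)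
  obtain ⟨T₃, hT₃, h₃⟩ := ex 3 (by norm_num)
  obtain ⟨T₄, hT₄, h₄⟩ := ex 4 (by norm_num)
  have hnum : (∑' n : ℤ, (-1 : ℝ) ^ n * q ^ (n * (5*n + 3) / 2)) / L = T₁ * T₄ := by
    have h := tendsto_jtp hQ0 hQ1 (x := q ^ 4) (by positivity) hL hP'
    simp only [thetaTerm_pow hq0 4 3 (by norm_num)] at h
    refine tendsto_nhds_unique h ((h₁.mul h₄).tendsto_prod_nat.congr fun N =>
      Finset.prod_congr rfl fun k _ => ?_)
    rw [show 5 * (k + 1) - 1 = 5 * k + 4 by omega, show 5 * (k + 1) - 4 = 5 * k + 1 by omega]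
    field_simp
    ring
  have hden : (∑' n : ℤ, (-1 : ℝ) ^ n * q ^ (n * (5*n + 1) / 2)) / L = T₂ * T₃ := by
    have h := tendsto_jtp hQ0 hQ1 (x := q ^ 3) (by positivity) hL hP'
    simp only [thetaTerm_pow hq0 3 1 (by norm_num)] at h
    refine tendsto_nhds_unique h ((h₂.mul h₃).tendsto_prod_nat.congr fun N =>
      Finset.prod_congr rfl fun k _ => ?_)
    rw [show 5 * (k + 1) - 2 = 5 * k + 3 by omega, show 5 * (k + 1) - 3 = 5 * k + 2 by omega]
    field_simp
    ring
  rw [((h₁.mul h₄).div₀ (h₂.mul h₃) (mul_ne_zero hT₂ hT₃)).tprod_eq, ← hnum, ← hden,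
    div_div_div_cancel_right₀ hL]
end

section
/- For every real b > 0, R(e^{−2πb}) = θ₂(3π/10; e^{−π/(5b)}) / θ₂(π/10; e^{−π/(5b)}). -/
/-!
Write `A = 5 b` and `q = exp (-2 π b)`. By the Jacobi triple product in base `q ^ 5`, the numerator
and the denominator of the Rogers–Ramanujan product are, up to one common nonzero factor, the theta
series `S(x) = ∑ (-1) ^ k exp (-π A (k ^ 2 + 2 k x))` over `k ∈ ℤ`, at `x = 3 / 10` and `x = 1 / 10`
respectively. The functional equation of the two-variable Jacobi theta function gives
`S(x) = A ^ (-1 / 2) exp (π A x ^ 2) θ₂(π x; exp (-π / A))`, and in the quotient the factors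
`exp (π A x ^ 2)` cancel the prefactor `q ^ (1 / 5)`.

The triple product (`exists_triple_product`) is obtained from its finite form
(`finite_triple_product`), an induction based on the `q`-Pascal rule for the central Gaussian
binomials `[2N choose N + k]`, by dominated convergence as `N → ∞`. The nonvanishing of the infinite
product shows that neither the common factor nor the `θ₂` in the denominator is zero.
-/

open Real

/-! ### The Jacobi triple product -/

/-- The reciprocal `1 / (Q; Q)_n` of the finite `q`-Pochhammer symbol, extended by `0` to
negative `n` (as for `1 / n!`), so that its recurrence holds on all of `ℤ`. -/
noncomputable def qfacInv (Q : ℝ) : ℤ → ℝ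
  | .ofNat n => (∏ i ∈ Finset.range n, (1 - Q ^ (i + 1)))⁻¹
  | .negSucc _ => 0

section JacobiTripleProduct

open Filter Topology Finset

lemma qfacInv_sub_one {Q : ℝ} (h0 : 0 < Q) (h1 : Q < 1) (n : ℤ) :
    qfacInv Q (n - 1) = (1 - Q ^ n) * qfacInv Q n := by
  rcases n with n | n
  · cases n with
    | zero =>
      have : (Int.ofNat 0 : ℤ) - 1 = Int.negSucc 0 := rfl
      rw [this]
      simp [qfacInv]
    | succ m =>
      have : (Int.ofNat (m + 1) : ℤ) - 1 = Int.ofNat m := by simp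
      rw [this]
      have h : Q ^ (m + 1) < 1 := pow_lt_one₀ h0.le h1 (by omega)
      have h' : (1 - Q ^ (m + 1)) ≠ 0 := by linarith
      have e : Q ^ (Int.ofNat (m + 1)) = Q ^ (m + 1) := zpow_natCast Q (m + 1)
      simp only [qfacInv, prod_range_succ, e]
      rw [mul_inv, mul_comm _ (1 - Q ^ (m + 1))⁻¹, mul_inv_cancel_left₀ h']
  · have : (Int.negSucc n : ℤ) - 1 = Int.negSucc (n + 1) := by omega
    rw [this]
    simp [qfacInv]

lemma multipliable_one_sub_geom {Q : ℝ} (h0 : 0 < Q) (h1 : Q < 1) {a : ℝ} (ha0 : 0 < a)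
    (ha1 : a < 1) : Multipliable (fun i : ℕ => 1 - a * Q ^ i) ∧
      ∏' i : ℕ, (1 - a * Q ^ i) ≠ 0 := by
  have hs : Summable (fun i : ℕ => ‖-(a * Q ^ i)‖) := by
    have := ((summable_geometric_of_lt_one h0.le h1).mul_left a).norm
    simpa using this
  simp only [sub_eq_add_neg]
  refine ⟨multipliable_one_add_of_summable hs, tprod_one_add_ne_zero_of_summable ?_ hs⟩
  intro i
  have : Q ^ i ≤ 1 := pow_le_one₀ h0.le h1.le
  have : a * Q ^ i ≤ a := by nlinarith
  linarith

lemma exists_tendsto_qfacInv {Q : ℝ} (h0 : 0 < Q) (h1 : Q < 1) :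
    ∃ L : ℝ, L ≠ 0 ∧ Tendsto (qfacInv Q) atTop (𝓝 L) ∧ ∃ B, ∀ n, |qfacInv Q n| ≤ B := by
  obtain ⟨hm, hne⟩ := multipliable_one_sub_geom h0 h1 h0 h1
  have hl := hm.hasProd.tendsto_prod_nat.inv₀ hne
  have hl' : Tendsto (fun n : ℕ => qfacInv Q (n : ℤ)) atTop
      (𝓝 (∏' i : ℕ, (1 - Q * Q ^ i))⁻¹) := by
    refine hl.congr fun n => ?_
    change _ = (∏ i ∈ Finset.range n, (1 - Q ^ (i + 1)))⁻¹
    simp only [pow_succ']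
  refine ⟨_, inv_ne_zero hne, ?_, ?_⟩
  · rw [← Nat.map_cast_int_atTop, tendsto_map'_iff]
    exact hl'
  · obtain ⟨B, hB⟩ := hl'.abs.bddAbove_range
    refine ⟨B, fun n => ?_⟩
    have hB' : ∀ n : ℕ, |qfacInv Q n| ≤ B := fun n => hB ⟨n, rfl⟩
    rcases n with n | n
    · exact hB' n
    · simpa [qfacInv] using (abs_nonneg _).trans (hB' 0)

lemma qfacInv_natCast_pos {Q : ℝ} (h0 : 0 < Q) (h1 : Q < 1) (n : ℕ) : 0 < qfacInv Q n := by
  change 0 < (∏ i ∈ Finset.range n, (1 - Q ^ (i + 1)))⁻¹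
  refine inv_pos.mpr (prod_pos fun i _ => ?_)
  have : Q ^ (i + 1) < 1 := pow_lt_one₀ h0.le h1 (by omega)
  linarith

/-- The Gaussian binomial coefficient `[2N choose N + k]` in base `Q`; it vanishes
for `|k| > N`. -/
noncomputable def centralGauss (Q : ℝ) (N : ℕ) (k : ℤ) : ℝ :=
  qfacInv Q (N + k) * qfacInv Q (N - k) / qfacInv Q ((2 * N : ℕ) : ℤ)

/-- The `q`-Pascal rule applied twice, passing from `2N` to `2N + 2`. -/
lemma centralGauss_succ {Q : ℝ} (h0 : 0 < Q) (h1 : Q < 1) (N : ℕ) (k : ℤ) :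
    centralGauss Q (N + 1) k = (1 + Q ^ (2 * N + 1)) * centralGauss Q N k
      + Q ^ (N - k + 1) * centralGauss Q N (k - 1)
      + Q ^ (N + k + 1) * centralGauss Q N (k + 1) := by
  have hQ : Q ≠ 0 := h0.ne'
  set X := Q ^ (N + k + 1 : ℤ) with hX
  set Y := Q ^ (N - k + 1 : ℤ) with hY
  set A := qfacInv Q (N + k + 1) with hA
  set B := qfacInv Q (N - k + 1) with hB
  set D := qfacInv Q ((2 * (N + 1) : ℕ) : ℤ) with hD
  have hXQ : Q ^ (N + k : ℤ) = X / Q := by rw [hX, zpow_add_one₀ hQ]; field_simp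
  have hYQ : Q ^ (N - k : ℤ) = Y / Q := by rw [hY, zpow_add_one₀ hQ]; field_simp
  have hXY : X * Y = Q ^ (2 * N + 2) := by
    rw [hX, hY, ← zpow_add₀ hQ, ← zpow_natCast]; congr 1; push_cast; ring
  have hXYQ : Q ^ (2 * N + 1) = X * Y / Q := by rw [hXY]; field_simp; ring
  have a1 : qfacInv Q (N + k) = (1 - X) * A := by
    rw [hX, hA, ← qfacInv_sub_one h0 h1]; congr 1; ring
  have a2 : qfacInv Q (N + k - 1) = (1 - X / Q) * ((1 - X) * A) := by
    rw [← a1, ← hXQ, ← qfacInv_sub_one h0 h1]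
  have b1 : qfacInv Q (N - k) = (1 - Y) * B := by
    rw [hY, hB, ← qfacInv_sub_one h0 h1]; congr 1; ring
  have b2 : qfacInv Q (N - k - 1) = (1 - Y / Q) * ((1 - Y) * B) := by
    rw [← b1, ← hYQ, ← qfacInv_sub_one h0 h1]
  have hDpos : 0 < D := qfacInv_natCast_pos h0 h1 _
  have d1 : qfacInv Q ((2 * N + 1 : ℕ) : ℤ) = (1 - X * Y) * D := by
    have e := qfacInv_sub_one h0 h1 ((2 * (N + 1) : ℕ) : ℤ)
    rw [zpow_natCast, show 2 * (N + 1) = 2 * N + 2 by ring, ← hXY] at e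
    rw [hD, show 2 * (N + 1) = 2 * N + 2 by ring, ← e]
    congr 1; push_cast; ring
  have d2 : qfacInv Q ((2 * N : ℕ) : ℤ) = (1 - X * Y / Q) * ((1 - X * Y) * D) := by
    have e := qfacInv_sub_one h0 h1 ((2 * N + 1 : ℕ) : ℤ)
    rw [zpow_natCast, hXYQ] at e
    rw [← d1, ← e]
    congr 1; push_cast; ring
  have n1 : 1 - X * Y ≠ 0 := by
    intro h
    have := qfacInv_natCast_pos h0 h1 (2 * N + 1)
    rw [d1, h] at this; simp at this
  have n2 : 1 - X * Y / Q ≠ 0 := by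
    intro h
    have := qfacInv_natCast_pos h0 h1 (2 * N)
    rw [d2, h] at this; simp at this
  have n2' : Q - X * Y ≠ 0 := by
    intro h
    apply n2
    rw [← sub_eq_zero.mp h, div_self hQ, sub_self]
  have e1 : ((N + 1 : ℕ) : ℤ) + k = N + k + 1 := by push_cast; ring
  have e2 : ((N + 1 : ℕ) : ℤ) - k = N - k + 1 := by push_cast; ring
  have e3 : (N : ℤ) + (k - 1) = N + k - 1 := by ring
  have e4 : (N : ℤ) - (k - 1) = N - k + 1 := by ring
  have e5 : (N : ℤ) + (k + 1) = N + k + 1 := by ring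
  have e6 : (N : ℤ) - (k + 1) = N - k - 1 := by ring
  unfold centralGauss
  rw [e1, e2, e3, e4, e5, e6, a1, a2, b1, b2, d2, hXYQ, ← hA, ← hB, ← hD]
  field_simp
  ring

lemma centralGauss_zero (Q : ℝ) (k : ℤ) : centralGauss Q 0 k = if k = 0 then 1 else 0 := by
  rcases k with k | k
  · cases k with
    | zero =>
      have : (Int.ofNat 0) = 0 := rfl
      simp only [this]
      have h : qfacInv Q 0 = 1 := by
        change (∏ i ∈ Finset.range 0, (1 - Q ^ (i + 1)))⁻¹ = 1
        simp
      simp [centralGauss, h]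
    | succ m =>
      have h : ((0 : ℕ) : ℤ) - Int.ofNat (m + 1) = Int.negSucc m := by
        simp [Int.negSucc_eq]
      have h' : Int.ofNat (m + 1) ≠ 0 := by simp; omega
      rw [if_neg h', centralGauss, h]
      simp [qfacInv]
  · have h : ((0 : ℕ) : ℤ) + Int.negSucc k = Int.negSucc k := by simp
    rw [if_neg (by omega), centralGauss, h]
    simp [qfacInv]

lemma exists_centralGauss_limit {Q : ℝ} (h0 : 0 < Q) (h1 : Q < 1) :
    ∃ L : ℝ, (∀ k, Tendsto (fun N => centralGauss Q N k) atTop (𝓝 L)) ∧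
      ∃ B, ∀ N k, |centralGauss Q N k| ≤ B := by
  obtain ⟨L, hL0, hL, B, hB⟩ := exists_tendsto_qfacInv h0 h1
  refine ⟨L * L / L, fun k => ?_, B * B, fun N k => ?_⟩
  · refine Tendsto.div (Tendsto.mul ?_ ?_) ?_ hL0
    · exact hL.comp (tendsto_atTop_add_const_right _ k tendsto_natCast_atTop_atTop)
    · simp only [sub_eq_add_neg]
      exact hL.comp (tendsto_atTop_add_const_right _ (-k) tendsto_natCast_atTop_atTop)
    · refine hL.comp ((tendsto_natCast_atTop_atTop (R := ℤ)).comp ?_)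
      exact tendsto_id.const_mul_atTop' (by norm_num)
  · have hpos := qfacInv_natCast_pos h0 h1 (2 * N)
    have hge : 1 ≤ qfacInv Q ((2 * N : ℕ) : ℤ) := by
      change 1 ≤ (∏ i ∈ Finset.range (2 * N), (1 - Q ^ (i + 1)))⁻¹
      have hp : ∀ i : ℕ, 0 < 1 - Q ^ (i + 1) := fun i => by
        have : Q ^ (i + 1) < 1 := pow_lt_one₀ h0.le h1 (by omega)
        linarith
      refine (one_le_inv₀ (prod_pos fun i _ => hp i)).mpr ?_
      refine prod_le_one (fun i _ => (hp i).le) fun i _ => ?_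
      have : 0 < Q ^ (i + 1) := by positivity
      linarith
    have hB0 : 0 ≤ B := (abs_nonneg _).trans (hB 0)
    rw [centralGauss, abs_div, abs_mul, abs_of_pos hpos]
    refine (div_le_self (by positivity) hge).trans ?_
    exact mul_le_mul (hB _) (hB _) (abs_nonneg _) hB0

/-- The finite Jacobi triple product. The bilateral theta terms `t` are encoded by their
two-term recurrence, which amounts to `t k = (-1) ^ k * a ^ (k (k + 1) / 2) * b ^ (k (k - 1) / 2)`. -/
lemma finite_triple_product {a b Q : ℝ} (hab : a * b = Q) (h0 : 0 < Q) (h1 : Q < 1)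
    {t : ℤ → ℝ} (ht0 : t 0 = 1) (ht : ∀ k, t (k + 1) = -a * Q ^ k * t k) (hs : Summable t)
    (N : ℕ) :
    ∏ i ∈ range N, ((1 - a * Q ^ i) * (1 - b * Q ^ i)) = ∑' k, centralGauss Q N k * t k := by
  have hQ : Q ≠ 0 := h0.ne'
  obtain ⟨L, -, B, hB⟩ := exists_centralGauss_limit h0 h1
  have hsum : ∀ N, Summable fun k => centralGauss Q N k * t k := fun N =>
    Summable.of_norm_bounded (hs.norm.mul_left B) fun k => by
      rw [norm_mul]; exact mul_le_mul_of_nonneg_right (hB N k) (norm_nonneg _)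
  induction N with
  | zero =>
    rw [tsum_eq_single 0 (fun k hk => by rw [centralGauss_zero, if_neg hk, zero_mul]),
      centralGauss_zero]
    simp [ht0]
  | succ N ih =>
    rw [prod_range_succ, ih]
    have H := (hsum N).hasSum
    have H1 := (Equiv.subRight (1 : ℤ)).hasSum_iff.mpr H
    have H2 := (Equiv.addRight (1 : ℤ)).hasSum_iff.mpr H
    have H3 := ((H.mul_left (1 + Q ^ (2 * N + 1))).add (H1.mul_left (-a * Q ^ N))).add
      (H2.mul_left (-b * Q ^ N))
    have hfun : ∀ k, centralGauss Q (N + 1) k * t k =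
        (1 + Q ^ (2 * N + 1)) * (centralGauss Q N k * t k) +
        -a * Q ^ N * (centralGauss Q N (k - 1) * t (k - 1)) +
        -b * Q ^ N * (centralGauss Q N (k + 1) * t (k + 1)) := by
      intro k
      have r1 : t k = -a * Q ^ (k - 1) * t (k - 1) := by
        have := ht (k - 1)
        rwa [sub_add_cancel] at this
      have p1 : Q ^ (N - k + 1 : ℤ) * Q ^ (k - 1) = Q ^ N := by
        rw [← zpow_add₀ hQ, ← zpow_natCast]; congr 1; ring
      have p2 : Q ^ (N + k + 1 : ℤ) = Q ^ N * Q ^ k * Q := by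
        rw [zpow_add₀ hQ, zpow_add₀ hQ, zpow_natCast, zpow_one]
      have r2 : Q ^ (N - k + 1 : ℤ) * t k = -a * Q ^ N * t (k - 1) := by
        rw [r1, ← p1]; ring
      have r3 : Q ^ (N + k + 1 : ℤ) * t k = -b * Q ^ N * t (k + 1) := by
        rw [ht, p2, ← hab]; ring
      rw [centralGauss_succ h0 h1]
      linear_combination centralGauss Q N (k - 1) * r2 + centralGauss Q N (k + 1) * r3
    refine Eq.trans ?_ ((tsum_congr hfun).trans H3.tsum_eq).symm
    rw [← hab]
    ring

/-- The Jacobi triple product up to a nonzero constant depending only on `Q`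
(in fact `1 / (Q; Q)_∞`). -/
lemma exists_triple_product {Q : ℝ} (h0 : 0 < Q) (h1 : Q < 1) :
    ∃ L : ℝ, ∀ a b : ℝ, 0 < a → a < 1 → 0 < b → b < 1 → a * b = Q →
      ∀ t : ℤ → ℝ, t 0 = 1 → (∀ k, t (k + 1) = -a * Q ^ k * t k) → Summable t →
        HasProd (fun i : ℕ => (1 - a * Q ^ i) * (1 - b * Q ^ i)) (L * ∑' k, t k) ∧
          L * ∑' k, t k ≠ 0 := by
  obtain ⟨L, hL, B, hB⟩ := exists_centralGauss_limit h0 h1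
  refine ⟨L, fun a b ha0 ha1 hb0 hb1 hab t ht0 ht hs => ?_⟩
  obtain ⟨ma, na⟩ := multipliable_one_sub_geom h0 h1 ha0 ha1
  obtain ⟨mb, nb⟩ := multipliable_one_sub_geom h0 h1 hb0 hb1
  have hP := ma.hasProd.mul mb.hasProd
  have hlim : Tendsto (fun N => ∑' k, centralGauss Q N k * t k) atTop (𝓝 (∑' k, L * t k)) := by
    refine tendsto_tsum_of_dominated_convergence (hs.norm.mul_left B)
      (fun k => (hL k).mul_const _) (Eventually.of_forall fun N k => ?_)
    rw [norm_mul]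
    exact mul_le_mul_of_nonneg_right (hB N k) (norm_nonneg _)
  simp only [← finite_triple_product hab h0 h1 ht0 ht hs, tsum_mul_left] at hlim
  have := tendsto_nhds_unique hlim hP.tendsto_prod_nat
  rw [this]
  exact ⟨hP, mul_ne_zero na nb⟩

end JacobiTripleProduct

/-! ### Inversion of the theta series -/

section Theta

open Complex in
/-- The transformed theta series, indexed by half-integers `n - 1 / 2`, is Jacobi's `θ₂`. -/
lemma tsum_half_int_eq_theta2 {A : ℝ} (x : ℝ)
    (hg : Summable fun n : ℤ => cexp (π * I * (2 * n - 1) * x - π * ((n : ℂ) - 1 / 2) ^ 2 / A)) :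
    ∑' n : ℤ, cexp (π * I * (2 * n - 1) * x - π * ((n : ℂ) - 1 / 2) ^ 2 / A) =
      (theta2 (π * x) (rexp (-π / A)) : ℂ) := by
  have h1 := ((Equiv.addRight (1 : ℤ)).hasSum_iff.mpr hg.hasSum).nat_add_neg_add_one
  rw [← h1.tsum_eq, theta2]
  push_cast
  rw [← tsum_mul_left]
  refine tsum_congr fun n => ?_
  have hq : (rexp (-π / A)) ^ (((n : ℝ) + 1 / 2) ^ 2) = rexp (-π / A * ((n : ℝ) + 1 / 2) ^ 2) := by
    rw [Real.exp_mul]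
  rw [hq]
  push_cast
  rw [Complex.cos]
  simp only [Function.comp, Equiv.coe_addRight]
  push_cast
  have e1 : cexp (π * I * (2 * ((n : ℂ) + 1) - 1) * x - π * ((n : ℂ) + 1 - 1 / 2) ^ 2 / A) =
      cexp (-π / A * ((n : ℂ) + 1 / 2) ^ 2) * cexp ((2 * (n : ℂ) + 1) * (π * x) * I) := by
    rw [← Complex.exp_add]; congr 1; ring
  have e2 : cexp (π * I * (2 * (-((n : ℂ) + 1) + 1) - 1) * x -
        π * (-((n : ℂ) + 1) + 1 - 1 / 2) ^ 2 / A) =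
      cexp (-π / A * ((n : ℂ) + 1 / 2) ^ 2) * cexp (-((2 * (n : ℂ) + 1) * (π * x)) * I) := by
    rw [← Complex.exp_add]; congr 1; ring
  rw [e1, e2]
  ring

open Complex in
lemma theta_inversion_complex {A : ℝ} (hA : 0 < A) (x : ℝ) :
    HasSum (fun k : ℤ => (-1 : ℂ) ^ k * cexp (-π * A * (k ^ 2 + 2 * k * x)))
      (1 / (A : ℂ) ^ (1 / 2 : ℂ) * (cexp (π * A * x ^ 2) *
        (theta2 (π * x) (rexp (-π / A)) : ℂ))) := by
  have hA' : (A : ℂ) ≠ 0 := by exact_mod_cast hA.ne'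
  set τ : ℂ := I * A with hτ
  -- the shift by `1 / 2` produces the signs `(-1) ^ k`
  set z : ℂ := I * A * x + 1 / 2 with hz
  have him : 0 < τ.im := by simpa [hτ] using hA
  have H := hasSum_jacobiTheta₂_term z him
  have him_inv : 0 < (-1 / τ).im := by
    have : -1 / τ = I * ((A⁻¹ : ℝ) : ℂ) := by
      rw [hτ]; push_cast; field_simp; simp
    rw [this]; simpa using hA
  have H' := hasSum_jacobiTheta₂_term (z / τ) him_inv
  -- completing the square turns the transformed series into one over half-integers
  have hterm : ∀ n : ℤ, cexp (-π * I * z ^ 2 / τ) * jacobiTheta₂_term n (z / τ) (-1 / τ) =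
      cexp (π * A * x ^ 2) *
        cexp (π * I * (2 * n - 1) * x - π * ((n : ℂ) - 1 / 2) ^ 2 / A) := by
    intro n
    rw [jacobiTheta₂_term, ← Complex.exp_add, ← Complex.exp_add]
    congr 1
    rw [hτ, hz]
    field_simp
    ring_nf
    simp only [I_sq]
    ring_nf
  have hS := H'.mul_left (cexp (-π * I * z ^ 2 / τ))
  simp only [hterm] at hS
  have hg : Summable fun n : ℤ =>
      cexp (π * I * (2 * n - 1) * x - π * ((n : ℂ) - 1 / 2) ^ 2 / A) :=
    (summable_mul_left_iff (Complex.exp_ne_zero _)).mp hS.summable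
  have hval := hS.tsum_eq
  rw [tsum_mul_left, tsum_half_int_eq_theta2 x hg] at hval
  have hIτ : -I * τ = A := by rw [hτ, ← mul_assoc]; simp
  rw [jacobiTheta₂_functional_equation, mul_assoc, ← hval, hIτ] at H
  convert H using 2 with k
  have hk : (-1 : ℂ) ^ k = cexp (π * I * k) := by
    rw [← Complex.exp_pi_mul_I, ← Complex.exp_int_mul]; congr 1; ring
  rw [hk, jacobiTheta₂_term, ← Complex.exp_add, hτ, hz]
  congr 1
  ring_nf
  simp only [I_sq]
  ring_nf

/-- Inversion formula for the theta series `∑ (-1) ^ k exp (-π A (k ^ 2 + 2 k x))`. -/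
lemma theta_inversion {A : ℝ} (hA : 0 < A) (x : ℝ) :
    HasSum (fun k : ℤ => (-1 : ℝ) ^ k * rexp (-π * A * (k ^ 2 + 2 * k * x)))
      (1 / √A * (rexp (π * A * x ^ 2) * theta2 (π * x) (rexp (-π / A)))) := by
  have h := theta_inversion_complex hA x
  have hs : ((√A : ℝ) : ℂ) = (A : ℂ) ^ (1 / 2 : ℂ) := by
    rw [Real.sqrt_eq_rpow, Complex.ofReal_cpow hA.le]; norm_num
  rw [← hs] at h
  refine Complex.hasSum_ofReal.mp ?_
  push_cast
  exact h

end Theta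

/-! ### The Rogers–Ramanujan continued fraction -/

/-- The terms of the theta series satisfy the recurrence that the triple product requires, with
`a = exp (-π A (1 + 2 x))` and `Q = exp (-2 π A)`. -/
lemma theta_series_recurrence (A x a Q : ℝ) (ha : a = rexp (-π * A * (1 + 2 * x)))
    (hQ : Q = rexp (-2 * π * A)) (k : ℤ) :
    (-1 : ℝ) ^ (k + 1) * rexp (-π * A * (((k + 1 : ℤ) : ℝ) ^ 2 + 2 * ((k + 1 : ℤ) : ℝ) * x)) =
      -a * Q ^ k * ((-1 : ℝ) ^ k * rexp (-π * A * ((k : ℝ) ^ 2 + 2 * k * x))) := by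
  have e : rexp (-π * A * (((k + 1 : ℤ) : ℝ) ^ 2 + 2 * ((k + 1 : ℤ) : ℝ) * x)) =
      a * Q ^ k * rexp (-π * A * ((k : ℝ) ^ 2 + 2 * k * x)) := by
    rw [ha, hQ, ← Real.rpow_intCast, ← Real.exp_mul, ← Real.exp_add, ← Real.exp_add]
    congr 1; push_cast; ring
  rw [e, zpow_add_one₀ (by norm_num)]
  ring

theorem rrcf_eq_theta2_ratio (b : ℝ) (hb : 0 < b) :
    rrcf (Real.exp (-2 * Real.pi * b)) =
      theta2 (3 * Real.pi / 10) (Real.exp (-Real.pi / (5 * b))) /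
        theta2 (Real.pi / 10) (Real.exp (-Real.pi / (5 * b))) := by
  set q := Real.exp (-2 * Real.pi * b) with hq
  have hA : 0 < 5 * b := by positivity
  have hq0 : 0 < q := Real.exp_pos _
  have hq1 : q < 1 := Real.exp_lt_one_iff.mpr (by have := Real.pi_pos; nlinarith [mul_pos this hb])
  have hpow : ∀ n : ℕ, q ^ n = rexp (-2 * π * b * n) := fun n => by
    rw [hq, ← Real.exp_nat_mul]; congr 1; ring
  have hlt : ∀ n : ℕ, n ≠ 0 → q ^ n < 1 := fun n hn => pow_lt_one₀ hq0.le hq1 hn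
  have hQ : q ^ 5 = rexp (-2 * π * (5 * b)) := by rw [hpow]; congr 1; push_cast; ring
  obtain ⟨L, hL⟩ := exists_triple_product (Q := q ^ 5) (by positivity) (hlt 5 (by norm_num))
  have T1 := theta_inversion hA (3 / 10)
  have T2 := theta_inversion hA (1 / 10)
  obtain ⟨P1, -⟩ := hL (q ^ 4) (q ^ 1) (by positivity) (hlt 4 (by norm_num)) (by positivity)
    (hlt 1 (by norm_num)) (by ring) _ (by simp)
    (theta_series_recurrence (5 * b) (3 / 10) _ _
      (by rw [hpow]; congr 1; push_cast; ring) hQ) T1.summable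
  obtain ⟨P2, N2⟩ := hL (q ^ 3) (q ^ 2) (by positivity) (hlt 3 (by norm_num)) (by positivity)
    (hlt 2 (by norm_num)) (by ring) _ (by simp)
    (theta_series_recurrence (5 * b) (1 / 10) _ _
      (by rw [hpow]; congr 1; push_cast; ring) hQ) T2.summable
  rw [T1.tsum_eq] at P1
  rw [T2.tsum_eq] at P2 N2
  have P := P1.div₀ P2 N2
  have hprod : ∀ n : ℕ, (1 - q ^ (5*(n+1) - 1)) * (1 - q ^ (5*(n+1) - 4)) /
      ((1 - q ^ (5*(n+1) - 2)) * (1 - q ^ (5*(n+1) - 3))) =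
      (1 - q ^ 4 * (q ^ 5) ^ n) * (1 - q ^ 1 * (q ^ 5) ^ n) /
      ((1 - q ^ 3 * (q ^ 5) ^ n) * (1 - q ^ 2 * (q ^ 5) ^ n)) := by
    intro n
    simp only [← pow_mul, ← pow_add]
    rw [show 5 * (n + 1) - 1 = 4 + 5 * n by omega, show 5 * (n + 1) - 4 = 1 + 5 * n by omega,
      show 5 * (n + 1) - 2 = 3 + 5 * n by omega, show 5 * (n + 1) - 3 = 2 + 5 * n by omega]
  rw [rrcf, tprod_congr hprod, P.tprod_eq,
    show 3 * Real.pi / 10 = π * (3 / 10) by ring, show Real.pi / 10 = π * (1 / 10) by ring]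
  set θ₃ := theta2 (π * (3 / 10)) (rexp (-π / (5 * b)))
  set θ₁ := theta2 (π * (1 / 10)) (rexp (-π / (5 * b)))
  have hs : √(5 * b) ≠ 0 := (Real.sqrt_pos.mpr hA).ne'
  have hL0 : L ≠ 0 := left_ne_zero_of_mul N2
  have hθ : θ₁ ≠ 0 := right_ne_zero_of_mul (right_ne_zero_of_mul (right_ne_zero_of_mul N2))
  -- the powers of `q` left over from completing the two squares cancel `q ^ (1 / 5)`
  have hexp : q ^ ((1 : ℝ) / 5) * rexp (π * (5 * b) * (3 / 10) ^ 2) =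
      rexp (π * (5 * b) * (1 / 10) ^ 2) := by
    rw [hq, ← Real.exp_mul, ← Real.exp_add]; congr 1; ring
  have he := (Real.exp_pos (π * (5 * b) * (1 / 10) ^ 2)).ne'
  rw [mul_div_mul_left _ _ hL0, mul_div_mul_left _ _ (one_div_ne_zero hs), mul_div_assoc',
    ← mul_assoc, hexp, mul_div_mul_left _ _ he]
end

section
/- For every real b > 0, R(e^{−2π/b}) = θ₂(3π/10; e^{−πb/5}) / θ₂(π/10; e^{−πb/5}). -/
/-!
With `Q = exp (-10π/b)`, the numerator and denominator of the Rogers–Ramanujan product are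
`∏ (1 - Q^{k+1/2+a}) (1 - Q^{k+1/2-a})` for `a = 3/10` and `a = 1/10`. The Jacobi triple product turns
each of them into `∑_j (-1)^j Q^{(j+a)²/2}`, up to a factor `Q^{-a²/2}` and a constant that does not
depend on `a`; in the quotient the constant cancels and the factors `Q^{-a²/2}` cancel the prefactor
`q^{1/5}`. Poisson summation identifies `∑_j (-1)^j exp (-π (j+a)²/τ)` with
`√τ θ₂(πa; exp (-πτ))`, and `τ = b/5` gives the claim.

The triple product (`exists_hasProd_eq_altTheta`) is the limit, by dominated convergence, of its
finite form `hasSum_fterm`, whose coefficients are the `q`-binomials `[2N, N + j]`. These are summed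
over all of `ℤ`, with `1 / (Q; Q)_n` set to `0` for `n < 0`, so that the `q`-Pascal rule
`fterm_succ` has no boundary cases. Poisson summation is `Complex.tsum_exp_neg_quadratic`, used in
`theta2_eq_altTheta`.
-/

open Real

namespace RRTheta

open Filter Topology

/-- The finite `q`-Pochhammer symbol `(Q; Q)_n = ∏_{k=1}^n (1 - Q^k)` at `Q = exp (-L)`. -/
noncomputable def poch (L : ℝ) (n : ℕ) : ℝ :=
  ∏ k ∈ Finset.range n, (1 - rexp (-L * (k + 1)))

/-- The reciprocal `1 / (Q; Q)_n` at `Q = exp (-L)`, extended by `0` to negative `n`. With this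
convention `r (n - 1) = (1 - Q ^ n) * r n` holds for every integer `n`. -/
noncomputable def rpoch (L : ℝ) (n : ℤ) : ℝ :=
  if n < 0 then 0 else (poch L n.toNat)⁻¹

/-- The alternating theta series `∑_{j ∈ ℤ} (-1)^j exp (-π t (j + a)²)`. -/
noncomputable def altTheta (t a : ℝ) : ℝ :=
  ∑' j : ℤ, (-1 : ℝ) ^ j * rexp (-π * t * (j + a) ^ 2)

/-- The `k`-th factor `(1 - Q^{k+1/2+a}) (1 - Q^{k+1/2-a})` of the product side of the Jacobi triple
product, at `Q = exp (-L)`. -/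
noncomputable def jfac (L a : ℝ) (k : ℕ) : ℝ :=
  (1 - rexp (-L * (k + 1 / 2 + a))) * (1 - rexp (-L * (k + 1 / 2 - a)))

/-! ### The `q`-Pochhammer symbol -/

lemma one_sub_exp_pos {L y : ℝ} (hL : 0 < L) (hy : 0 < y) : 0 < 1 - rexp (-L * y) := by
  have : rexp (-L * y) < 1 := Real.exp_lt_one_iff.mpr (by nlinarith)
  linarith

lemma poch_pos {L : ℝ} (hL : 0 < L) (n : ℕ) : 0 < poch L n :=
  Finset.prod_pos fun k _ => one_sub_exp_pos hL (by positivity)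

lemma poch_le_one {L : ℝ} (hL : 0 < L) (n : ℕ) : poch L n ≤ 1 :=
  Finset.prod_le_one (fun k _ => (one_sub_exp_pos hL (by positivity)).le)
    fun k _ => by linarith [Real.exp_pos (-L * ((k : ℝ) + 1))]

lemma rpoch_sub_one {L : ℝ} (hL : 0 < L) (n : ℤ) :
    rpoch L (n - 1) = (1 - rexp (-L * n)) * rpoch L n := by
  rcases lt_trichotomy n 0 with h | h | h
  · simp [rpoch, h, show n - 1 < 0 by omega]
  · simp [rpoch, h]
  · obtain ⟨m, rfl⟩ : ∃ m : ℕ, n = m + 1 := ⟨(n - 1).toNat, by omega⟩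
    have h1 := (one_sub_exp_pos hL (y := (m : ℝ) + 1) (by positivity)).ne'
    have h3 : poch L (m + 1) = poch L m * (1 - rexp (-L * (m + 1))) :=
      Finset.prod_range_succ _ _
    have h4 : ¬ ((m : ℤ) + 1 < 0) := by omega
    have h5 : ((m : ℤ) + 1).toNat = m + 1 := by omega
    rw [rpoch, rpoch, add_sub_cancel_right, if_neg (by omega), if_neg h4, h5, h3, Int.toNat_natCast]
    push_cast
    rw [mul_inv, mul_left_comm, mul_inv_cancel₀ h1, mul_one]

/-! ### The finite triple product -/

/-- The summand of the finite triple product: a Gaussian times the `q`-binomial coefficient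
`[2N, N + j]`. -/
noncomputable def fterm (L a : ℝ) (N : ℕ) (j : ℤ) : ℝ :=
  (-1) ^ j * rexp (-L * ((j + a) ^ 2 / 2)) *
    (poch L (2 * N) * rpoch L (N - j) * rpoch L (N + j))

/-- The `q`-Pascal rule that drives the induction in the finite triple product. -/
lemma fterm_succ {L : ℝ} (hL : 0 < L) (a : ℝ) (N : ℕ) (j : ℤ) :
    fterm L a (N + 1) j = (1 + rexp (-L * (2 * N + 1))) * fterm L a N j
      - rexp (-L * (N + 1 / 2 + a)) * fterm L a N (j - 1)
      - rexp (-L * (N + 1 / 2 - a)) * fterm L a N (j + 1) := by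
  have hP : poch L (2 * (N + 1)) =
      poch L (2 * N) * (1 - rexp (-L * (2 * N + 1))) * (1 - rexp (-L * (2 * N + 2))) := by
    rw [show 2 * (N + 1) = 2 * N + 1 + 1 by ring, poch, Finset.prod_range_succ,
      Finset.prod_range_succ, ← poch]
    push_cast
    ring_nf
  have hA : rpoch L (N - j) = (1 - rexp (-L * (N + 1 - j))) * rpoch L (N + 1 - j) := by
    have := rpoch_sub_one hL (N + 1 - j)
    rw [show (N : ℤ) + 1 - j - 1 = N - j by ring] at this
    push_cast at this
    exact this
  have hA' : rpoch L (N - (j + 1)) = (1 - rexp (-L * (N - j))) * rpoch L (N - j) := by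
    have := rpoch_sub_one hL (N - j)
    rw [show (N : ℤ) - j - 1 = N - (j + 1) by ring] at this
    push_cast at this
    exact this
  have hB : rpoch L (N + j) = (1 - rexp (-L * (N + 1 + j))) * rpoch L (N + 1 + j) := by
    have := rpoch_sub_one hL (N + 1 + j)
    rw [show (N : ℤ) + 1 + j - 1 = N + j by ring] at this
    push_cast at this
    exact this
  have hB' : rpoch L (N + (j - 1)) = (1 - rexp (-L * (N + j))) * rpoch L (N + j) := by
    have := rpoch_sub_one hL (N + j)
    rw [show (N : ℤ) + j - 1 = N + (j - 1) by ring] at this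
    push_cast at this
    exact this
  have e1 : rexp (-L * (N + 1 / 2 + a)) * rexp (-L * ((j - 1 + a) ^ 2 / 2)) =
      rexp (-L * ((j + a) ^ 2 / 2)) * (rexp (-L * (N - j)) * rexp (-L)) := by
    simp only [← Real.exp_add]; ring_nf
  have e2 : rexp (-L * (N + 1 / 2 - a)) * rexp (-L * ((j + 1 + a) ^ 2 / 2)) =
      rexp (-L * ((j + a) ^ 2 / 2)) * (rexp (-L * (N + j)) * rexp (-L)) := by
    simp only [← Real.exp_add]; ring_nf
  have e3 : rexp (-L * (2 * N + 1)) = rexp (-L * (N - j)) * rexp (-L * (N + j)) * rexp (-L) := by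
    simp only [← Real.exp_add]; ring_nf
  have e4 : rexp (-L * (2 * N + 2)) =
      rexp (-L * (N - j)) * rexp (-L * (N + j)) * rexp (-L) ^ 2 := by
    rw [pow_two]; simp only [← Real.exp_add]; ring_nf
  have e5 : rexp (-L * (N + 1 - j)) = rexp (-L * (N - j)) * rexp (-L) := by
    simp only [← Real.exp_add]; ring_nf
  have e6 : rexp (-L * (N + 1 + j)) = rexp (-L * (N + j)) * rexp (-L) := by
    simp only [← Real.exp_add]; ring_nf
  have s1 : (-1 : ℝ) ^ (j - 1) = -(-1) ^ j := by
    rw [zpow_sub_one₀ (by norm_num)]; norm_num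
  have s2 : (-1 : ℝ) ^ (j + 1) = -(-1) ^ j := by
    rw [zpow_add_one₀ (by norm_num)]; norm_num
  have i1 : (N : ℤ) - (j - 1) = N + 1 - j := by ring
  have i2 : (N : ℤ) + (j + 1) = N + 1 + j := by ring
  unfold fterm
  push_cast
  rw [i1, i2, hA', hB', hA, hB, hP, s1, s2]
  rw [e5, e6, e3, e4]
  linear_combination
    (-(-1 : ℝ) ^ j * poch L (2 * N) * rpoch L (N + 1 - j) *
      ((1 - rexp (-L * (N + j))) * ((1 - rexp (-L * (N + j)) * rexp (-L)) *
        rpoch L (N + 1 + j)))) * e1 +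
    (-(-1 : ℝ) ^ j * poch L (2 * N) * rpoch L (N + 1 + j) *
      ((1 - rexp (-L * (N - j))) * ((1 - rexp (-L * (N - j)) * rexp (-L)) *
        rpoch L (N + 1 - j)))) * e2

/-- Finite Jacobi triple product. The sum has finite support, since `rpoch` vanishes at negative
arguments. -/
lemma hasSum_fterm {L : ℝ} (hL : 0 < L) (a : ℝ) (N : ℕ) :
    HasSum (fterm L a N)
      (rexp (-L * (a ^ 2 / 2)) * ∏ k ∈ Finset.range N, jfac L a k) := by
  induction N with
  | zero =>
    have h := hasSum_single (f := fterm L a 0) 0 (fun j hj => by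
      rcases lt_or_gt_of_ne hj with h | h
      · simp [fterm, rpoch, h]
      · simp [fterm, rpoch, h])
    simpa [fterm, rpoch, poch] using h
  | succ N ih =>
    have h1 := (Equiv.subRight (1 : ℤ)).hasSum_iff.mpr ih
    have h2 := (Equiv.addRight (1 : ℤ)).hasSum_iff.mpr ih
    have h := ((ih.mul_left (1 + rexp (-L * (2 * N + 1)))).sub
      (h1.mul_left (rexp (-L * (N + 1 / 2 + a))))).sub
      (h2.mul_left (rexp (-L * (N + 1 / 2 - a))))
    have e : rexp (-L * (2 * N + 1)) =
        rexp (-L * (N + 1 / 2 + a)) * rexp (-L * (N + 1 / 2 - a)) := by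
      rw [← Real.exp_add]; ring_nf
    have hv : ∏ k ∈ Finset.range (N + 1), jfac L a k = (1 + rexp (-L * (2 * N + 1)) -
        rexp (-L * (N + 1 / 2 + a)) - rexp (-L * (N + 1 / 2 - a))) *
          ∏ k ∈ Finset.range N, jfac L a k := by
      rw [Finset.prod_range_succ, jfac, e]
      ring
    rw [hv, show fterm L a (N + 1) = _ from funext (fterm_succ hL a N)]
    refine (congrArg (HasSum _) ?_).mp h
    ring

/-! ### The limit of the finite triple product -/

lemma summable_exp_neg_mul {L : ℝ} (hL : 0 < L) (y : ℝ) :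
    Summable fun k : ℕ => rexp (-L * (k + y)) := by
  have h := (Real.summable_exp_nat_mul_iff (a := -L)).mpr (by linarith)
  refine (h.mul_right (rexp (-L * y))).congr fun k => ?_
  rw [← Real.exp_add]; ring_nf

lemma multipliable_one_sub_exp {L y : ℝ} (hL : 0 < L) :
    Multipliable fun k : ℕ => 1 - rexp (-L * (k + y)) := by
  simpa [sub_eq_add_neg] using
    Real.multipliable_one_add_of_summable (summable_exp_neg_mul hL y).neg

lemma tprod_one_sub_exp_ne_zero {L y : ℝ} (hL : 0 < L) (hy : 0 < y) :
    ∏' k : ℕ, (1 - rexp (-L * (k + y))) ≠ 0 := by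
  have := tprod_one_add_ne_zero_of_summable (f := fun k : ℕ => -rexp (-L * (k + y)))
    (fun k => by
      have := one_sub_exp_pos hL (y := k + y) (by positivity)
      simpa [sub_eq_add_neg] using this.ne')
    (summable_exp_neg_mul hL y).neg.norm
  simpa [sub_eq_add_neg] using this

lemma exists_hasProd_jfac {L a : ℝ} (hL : 0 < L) (h1 : 0 < 1 / 2 + a) (h2 : 0 < 1 / 2 - a) :
    ∃ p, p ≠ 0 ∧ HasProd (jfac L a) p := by
  refine ⟨_, mul_ne_zero (tprod_one_sub_exp_ne_zero hL h1) (tprod_one_sub_exp_ne_zero hL h2), ?_⟩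
  convert (multipliable_one_sub_exp (y := 1 / 2 + a) hL).hasProd.mul
    (multipliable_one_sub_exp (y := 1 / 2 - a) hL).hasProd using 1
  funext k
  simp only [jfac, add_assoc, add_sub_assoc]

lemma exists_tendsto_poch {L : ℝ} (hL : 0 < L) :
    ∃ p, p ≠ 0 ∧ Tendsto (poch L) atTop (𝓝 p) :=
  ⟨_, tprod_one_sub_exp_ne_zero hL one_pos,
    (multipliable_one_sub_exp (y := 1) hL).hasProd.tendsto_prod_nat⟩

lemma tendsto_rpoch {L p : ℝ} (hp : p ≠ 0) (h : Tendsto (poch L) atTop (𝓝 p)) :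
    Tendsto (rpoch L) atTop (𝓝 p⁻¹) := by
  have h1 : Tendsto Int.toNat atTop atTop :=
    tendsto_atTop.mpr fun b => (eventually_ge_atTop (b : ℤ)).mono fun n hn => by omega
  refine ((h.inv₀ hp).comp h1).congr' ?_
  filter_upwards [eventually_ge_atTop 0] with n hn
  simp [rpoch, not_lt.mpr hn]

lemma exists_rpoch_bound {L : ℝ} (hL : 0 < L) : ∃ K, ∀ n, ‖rpoch L n‖ ≤ K := by
  obtain ⟨p, hp, h⟩ := exists_tendsto_poch hL
  obtain ⟨K, hK⟩ := (h.inv₀ hp).norm.bddAbove_range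
  refine ⟨K, fun n => ?_⟩
  unfold rpoch
  split_ifs
  · simpa using (norm_nonneg _).trans (hK ⟨0, rfl⟩)
  · exact hK ⟨n.toNat, rfl⟩

lemma summable_gauss {t : ℝ} (ht : 0 < t) (a : ℝ) :
    Summable fun j : ℤ => rexp (-π * t * (j + a) ^ 2) := by
  refine (HurwitzKernelBounds.summable_f_int 0 a ht).congr fun j => ?_
  simp only [HurwitzKernelBounds.f_int, pow_zero, one_mul]
  ring_nf

/-- Jacobi triple product up to its constant: the products of `jfac` are `altTheta`, times a Gaussian
factor, times a constant `κ` (namely `(Q; Q)_∞`) that does not depend on `a`. -/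
lemma exists_hasProd_eq_altTheta {t : ℝ} (ht : 0 < t) :
    ∃ κ : ℝ, κ ≠ 0 ∧ ∀ a p : ℝ, HasProd (jfac (2 * π * t) a) p →
      altTheta t a = κ * (rexp (-π * t * a ^ 2) * p) := by
  have hL : 0 < 2 * π * t := by positivity
  set L := 2 * π * t with hLdef
  obtain ⟨P, hP, hlim⟩ := exists_tendsto_poch hL
  obtain ⟨K, hK⟩ := exists_rpoch_bound hL
  have hr := tendsto_rpoch hP hlim
  refine ⟨P, hP, fun a p hp => ?_⟩
  have hg (j : ℤ) : rexp (-L * ((j + a) ^ 2 / 2)) = rexp (-π * t * (j + a) ^ 2) := by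
    rw [hLdef]; ring_nf
  have h1 : Tendsto (fun N => ∑' j, fterm L a N j) atTop
      (𝓝 (∑' j : ℤ, ((-1 : ℝ) ^ j * rexp (-π * t * (j + a) ^ 2)) * (P * P⁻¹ * P⁻¹))) := by
    refine tendsto_tsum_of_dominated_convergence
      (bound := fun j : ℤ => rexp (-π * t * (j + a) ^ 2) * (1 * K * K))
      ((summable_gauss ht a).mul_right _) (fun j => ?_) (Eventually.of_forall fun N j => ?_)
    · unfold fterm
      rw [hg]
      refine Tendsto.const_mul _ ((Tendsto.mul ?_ ?_).mul ?_)
      · exact hlim.comp (tendsto_id.const_mul_atTop' two_pos)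
      · exact hr.comp (tendsto_atTop_add_const_right _ (-j) tendsto_natCast_atTop_atTop)
      · exact hr.comp (tendsto_atTop_add_const_right _ j tendsto_natCast_atTop_atTop)
    · have hK0 : 0 ≤ K := (norm_nonneg _).trans (hK 0)
      have hPN : ‖poch L (2 * N)‖ ≤ 1 := by
        rw [Real.norm_of_nonneg (poch_pos hL _).le]
        exact poch_le_one hL _
      unfold fterm
      rw [hg]
      simp only [norm_mul, norm_zpow, norm_neg, norm_one, one_zpow, one_mul,
        Real.norm_of_nonneg (Real.exp_pos _).le]
      have := mul_le_mul (mul_le_mul hPN (hK (N - j)) (norm_nonneg _) zero_le_one)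
        (hK (N + j)) (norm_nonneg _) (by positivity)
      rw [one_mul] at this
      gcongr
  have h2 : Tendsto (fun N => ∑' j, fterm L a N j) atTop
      (𝓝 (rexp (-L * (a ^ 2 / 2)) * p)) := by
    simp only [(hasSum_fterm hL a _).tsum_eq]
    exact hp.tendsto_prod_nat.const_mul _
  have h3 := tendsto_nhds_unique h2 h1
  rw [tsum_mul_right, show -L * (a ^ 2 / 2) = -π * t * a ^ 2 by rw [hLdef]; ring] at h3
  rw [h3, altTheta]
  field_simp

/-! ### Poisson summation -/

/-- The two-sided form of `theta2`, in the shape to which Poisson summation applies. -/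
lemma theta2_eq_tsum_int {τ : ℝ} (hτ : 0 < τ) (α : ℝ) :
    (theta2 (π * α) (rexp (-π * τ)) : ℂ) =
      ∑' n : ℤ, Complex.exp (-π * τ * (n + 1 / 2) ^ 2 + 2 * π * Complex.I * α * (n + 1 / 2)) := by
  set g : ℤ → ℂ := fun n =>
    Complex.exp (-π * τ * (n + 1 / 2) ^ 2 + 2 * π * Complex.I * α * (n + 1 / 2)) with hg
  have hs : Summable g := by
    refine Summable.of_norm ((summable_gauss hτ (1 / 2)).congr fun j => ?_)
    rw [hg, Complex.norm_exp]
    congr 1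
    have : (-π * τ * (j + 1 / 2) ^ 2 + 2 * π * Complex.I * α * (j + 1 / 2) : ℂ) =
      ((-π * τ * (j + 1 / 2) ^ 2 : ℝ) : ℂ) + ((2 * π * α * (j + 1 / 2) : ℝ) : ℂ) * Complex.I := by
      push_cast; ring
    rw [this, Complex.add_re, Complex.ofReal_re, Complex.re_ofReal_mul]
    simp
  have hs1 : Summable fun n : ℕ => g n := hs.comp_injective Nat.cast_injective
  have hs2 : Summable fun n : ℕ => g (-(n + 1)) :=
    hs.comp_injective (i := fun n : ℕ => -((n : ℤ) + 1)) fun m n h => by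
      simpa using h
  rw [tsum_of_nat_of_neg_add_one hs1 hs2, ← hs1.tsum_add hs2, theta2]
  push_cast
  rw [← tsum_mul_left]
  congr 1
  funext n
  have h1 : rexp (-π * τ) ^ (((n : ℝ) + 1 / 2) ^ 2) = rexp (-π * τ * (n + 1 / 2) ^ 2) := by
    rw [← Real.exp_mul]
  rw [h1, hg]
  push_cast
  rw [Complex.cos]
  have e1 : (-π * τ * (n + 1 / 2) ^ 2 + 2 * π * Complex.I * α * (n + 1 / 2) : ℂ) =
    -π * τ * (n + 1 / 2) ^ 2 + (2 * n + 1) * (π * α) * Complex.I := by ring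
  have e2 : (-π * τ * (-(n + 1) + 1 / 2) ^ 2 + 2 * π * Complex.I * α * (-(n + 1) + 1 / 2) : ℂ) =
    -π * τ * (n + 1 / 2) ^ 2 + -((2 * n + 1) * (π * α)) * Complex.I := by ring
  rw [e1, e2, Complex.exp_add, Complex.exp_add]
  ring

/-- The modular transformation of `theta2`, by Poisson summation. -/
lemma theta2_eq_altTheta {τ : ℝ} (hτ : 0 < τ) (α : ℝ) :
    (theta2 (π * α) (rexp (-π * τ)) : ℂ) = 1 / (τ : ℂ) ^ (1 / 2 : ℂ) * (altTheta τ⁻¹ α : ℂ) := by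
  have hτ' : (τ : ℂ) ≠ 0 := by exact_mod_cast hτ.ne'
  have hP := Complex.tsum_exp_neg_quadratic (a := τ) (by simpa using hτ)
    (-τ / 2 + Complex.I * α)
  have hl (n : ℤ) : Complex.exp (-π * τ * (n + 1 / 2) ^ 2 + 2 * π * Complex.I * α * (n + 1 / 2)) =
      Complex.exp (-π * τ / 4 + π * Complex.I * α) *
      Complex.exp (-π * τ * n ^ 2 + 2 * π * (-τ / 2 + Complex.I * α) * n) := by
    rw [← Complex.exp_add]; ring_nf
  have hr (n : ℤ) : Complex.exp (-π * τ / 4 + π * Complex.I * α) *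
      Complex.exp (-π / τ * (((-n : ℤ) : ℂ) + Complex.I * (-τ / 2 + Complex.I * α)) ^ 2) =
      (((-1 : ℝ) ^ n * rexp (-π * τ⁻¹ * (n + α) ^ 2) : ℝ) : ℂ) := by
    have h1 : ((-1 : ℂ)) ^ n = Complex.exp (-(π * Complex.I) * n) := by
      rw [mul_comm, Complex.exp_int_mul, Complex.exp_neg, Complex.exp_pi_mul_I]
      norm_num
    push_cast
    rw [h1, ← Complex.exp_add, ← Complex.exp_add]
    congr 1
    field_simp
    ring_nf
    simp only [Complex.I_sq, Complex.I_pow_three, Complex.I_pow_four]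
    ring
  rw [theta2_eq_tsum_int hτ, altTheta, Complex.ofReal_tsum]
  simp_rw [hl, ← hr]
  rw [tsum_mul_left, hP, tsum_mul_left,
    ← (Equiv.neg ℤ).tsum_eq fun n : ℤ =>
      Complex.exp (-π / τ * (n + Complex.I * (-τ / 2 + Complex.I * α)) ^ 2)]
  ring_nf
  rfl

end RRTheta

open RRTheta in
theorem rrcf_inv_eq_theta2_ratio (b : ℝ) (hb : 0 < b) :
    rrcf (Real.exp (-2 * Real.pi / b)) =
      theta2 (3 * Real.pi / 10) (Real.exp (-Real.pi * b / 5)) /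
        theta2 (Real.pi / 10) (Real.exp (-Real.pi * b / 5)) := by
  have ht : 0 < 5 / b := by positivity
  have hL : 0 < 2 * π * (5 / b) := by positivity
  -- The pairs of residues `{1, 4}` and `{2, 3}` modulo `5` are `5 * (1/2 ± a)` with `a = 3/10` and
  -- `a = 1/10`.
  obtain ⟨p, hp0, hp⟩ := exists_hasProd_jfac (a := 3 / 10) hL (by norm_num) (by norm_num)
  obtain ⟨r, hr0, hr⟩ := exists_hasProd_jfac (a := 1 / 10) hL (by norm_num) (by norm_num)
  have hR : rrcf (rexp (-2 * π / b)) = rexp (-2 * π / b / 5) * (p / r) := by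
    rw [rrcf, ← Real.exp_mul, mul_one_div, ← (hp.div₀ hr hr0).tprod_eq]
    congr 2
    funext n
    have key (m : ℕ) (y : ℝ) (h : (m : ℝ) = 5 * y) :
        rexp (-2 * π / b) ^ m = rexp (-(2 * π * (5 / b)) * y) := by
      rw [← Real.exp_nat_mul, h]; ring_nf
    rw [key (5 * (n + 1) - 1) (n + 1 / 2 + 3 / 10) (by
        rw [show 5 * (n + 1) - 1 = 5 * n + 4 by omega]; push_cast; ring),
      key (5 * (n + 1) - 4) (n + 1 / 2 - 3 / 10) (by
        rw [show 5 * (n + 1) - 4 = 5 * n + 1 by omega]; push_cast; ring),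
      key (5 * (n + 1) - 2) (n + 1 / 2 + 1 / 10) (by
        rw [show 5 * (n + 1) - 2 = 5 * n + 3 by omega]; push_cast; ring),
      key (5 * (n + 1) - 3) (n + 1 / 2 - 1 / 10) (by
        rw [show 5 * (n + 1) - 3 = 5 * n + 2 by omega]; push_cast; ring)]
    rfl
  obtain ⟨κ, hκ, hJ⟩ := exists_hasProd_eq_altTheta ht
  have hτ : 0 < b / 5 := by positivity
  have hc : (1 / ((b / 5 : ℝ) : ℂ) ^ (1 / 2 : ℂ)) ≠ 0 := by
    refine one_div_ne_zero ?_
    rw [Ne, Complex.cpow_eq_zero_iff]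
    exact fun h => hτ.ne' (by exact_mod_cast h.1)
  have hT : theta2 (3 * π / 10) (rexp (-π * b / 5)) / theta2 (π / 10) (rexp (-π * b / 5)) =
      altTheta (5 / b) (3 / 10) / altTheta (5 / b) (1 / 10) := by
    have h1 := theta2_eq_altTheta hτ (3 / 10)
    have h2 := theta2_eq_altTheta hτ (1 / 10)
    rw [inv_div] at h1 h2
    rw [show 3 * π / 10 = π * (3 / 10) by ring, show π / 10 = π * (1 / 10) by ring,
      show -π * b / 5 = -π * (b / 5) by ring, ← Complex.ofReal_inj, Complex.ofReal_div,
      Complex.ofReal_div, h1, h2, mul_div_mul_left _ _ hc]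
  have hE : rexp (-π * (5 / b) * (3 / 10) ^ 2) =
      rexp (-2 * π / b / 5) * rexp (-π * (5 / b) * (1 / 10) ^ 2) := by
    rw [← Real.exp_add]; ring_nf
  rw [hR, hT, hJ _ _ hp, hJ _ _ hr, hE]
  field_simp
end
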